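/- arXiv:1905.04375 — 12 statements merged into one kernel-verified Lean document; each statement's English description precedes it below -/
import Mathlib

section
/- Let (Γ,+,d) be a metric Abelian monoid whose pseudometric d is homogeneous. Then d is translation invariant: for all γ₁,γ₂,η ∈ Γ one has d(γ₁+η, γ₂+η) = d(γ₁,γ₂). -/
open MeasureTheory Filter

/-- A pseudometric on `Γ`: reflexive-zero, symmetric, triangle inequality. -/
def IsPseudoMetric {Γ : Type*} (d : Γ → Γ → ℝ) : Prop :=
  (∀ x, d x x = 0) ∧ (∀ x y, d x y = d y x) ∧ (∀ x y z, d x z ≤ d x y + d y z)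

/-- A metric Abelian monoid: an additive commutative monoid with a pseudometric
for which addition is 1-Lipschitz in each argument. -/
def IsMetricAbelianMonoid {Γ : Type*} [AddCommMonoid Γ] (d : Γ → Γ → ℝ) : Prop :=
  IsPseudoMetric d ∧ ∀ a b c : Γ, d (a + b) (a + c) ≤ d b c

/-- `φ : [1,∞) → [0,∞)` is admissible with constant `D ≥ 0`: non-decreasing,
summable against `dt/t²`, and `s·∫_s^∞ φ(t)/t² dt ≤ (D/8)·φ(s)` for all `s ≥ 1`. -/
def AdmissibleWith (φ : ℝ → ℝ) (D : ℝ) : Prop :=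
  (∀ t, 1 ≤ t → 0 ≤ φ t) ∧ MonotoneOn φ (Set.Ici 1) ∧ 0 ≤ D ∧
  (∀ s, 1 ≤ s → IntegrableOn (fun t => φ t / t ^ 2) (Set.Ioi s)) ∧
  (∀ s, 1 ≤ s → s * ∫ t in Set.Ioi s, φ t / t ^ 2 ≤ D / 8 * φ s)

def Admissible (φ : ℝ → ℝ) : Prop := ∃ D, AdmissibleWith φ D

/-- A sequence `γ : ℕ → Γ` is quasi-linear with defect bounded by `φ`
(with respect to the pseudometric `d`). -/
def QuasiLinear {Γ : Type*} [AddCommMonoid Γ] (d : Γ → Γ → ℝ) (φ : ℝ → ℝ)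
    (γ : ℕ → Γ) : Prop :=
  γ 0 = 0 ∧ ∀ m n : ℕ, 1 ≤ m → 1 ≤ n →
    d (γ (m + n)) (γ m + γ n) ≤ φ ((m + n : ℕ) : ℝ)

/-- The asymptotic distance `lim_{n→∞} d(γ₁(n),γ₂(n))/n`, realized as a `limsup`
(for quasi-linear sequences the limit exists, so this is that limit). -/
noncomputable def dista {Γ : Type*} (d : Γ → Γ → ℝ) (γ₁ γ₂ : ℕ → Γ) : ℝ :=
  Filter.limsup (fun n : ℕ => d (γ₁ n) (γ₂ n) / n) Filter.atTop

/-- If the pseudometric of a metric Abelian monoid is homogeneous, then it is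
translation invariant. -/
theorem mam_homogeneous_translation_invariant {Γ : Type*} [AddCommMonoid Γ]
    (d : Γ → Γ → ℝ) (h : IsMetricAbelianMonoid d)
    (hhom : ∀ (n : ℕ) (γ γ' : Γ), d (n • γ) (n • γ') = (n : ℝ) * d γ γ')
    (γ₁ γ₂ η : Γ) :
    d (γ₁ + η) (γ₂ + η) = d γ₁ γ₂ := by
  obtain ⟨⟨h0, hs, ht⟩, hl⟩ := h
  have step : ∀ n : ℕ, d (n • γ₁ + η) (n • γ₂ + η) ≤ n * d (γ₁ + η) (γ₂ + η) := by
    intro n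
    induction n with
    | zero => simp [h0]
    | succ n ih =>
      have e1 : (n + 1) • γ₁ + η = n • γ₁ + (γ₁ + η) := by rw [succ_nsmul, add_assoc]
      have e2 : (n + 1) • γ₂ + η = γ₂ + (n • γ₂ + η) := by rw [succ_nsmul']; rw [add_assoc]
      have e3 : n • γ₁ + (γ₂ + η) = γ₂ + (n • γ₁ + η) := by rw [add_left_comm]
      have t := ht (n • γ₁ + (γ₁ + η)) (n • γ₁ + (γ₂ + η)) (γ₂ + (n • γ₂ + η))
      have a1 := hl (n • γ₁) (γ₁ + η) (γ₂ + η)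
      have a2 := hl γ₂ (n • γ₁ + η) (n • γ₂ + η)
      rw [← e3] at a2
      rw [e1, e2]
      push_cast
      linarith
  have bound : ∀ n : ℕ, n * (d γ₁ γ₂ - d (γ₁ + η) (γ₂ + η)) ≤ 2 * d 0 η := by
    intro n
    have t1 := ht (n • γ₁) (n • γ₁ + η) (n • γ₂)
    have t2 := ht (n • γ₁ + η) (n • γ₂ + η) (n • γ₂)
    have b1 := hl (n • γ₁) 0 η
    have b2 := hl (n • γ₂) 0 η
    rw [add_zero] at b1 b2
    rw [hs] at b2
    have := step n
    rw [hhom] at t1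
    linarith
  apply le_antisymm
  · have := hl η γ₁ γ₂
    rwa [add_comm η, add_comm η] at this
  · by_contra hc
    have hpos : 0 < d γ₁ γ₂ - d (γ₁ + η) (γ₂ + η) := by linarith [not_le.mp hc]
    obtain ⟨n, hn⟩ := exists_nat_gt (2 * d 0 η / (d γ₁ γ₂ - d (γ₁ + η) (γ₂ + η)))
    rw [div_lt_iff₀ hpos] at hn
    linarith [bound n]
end

section
/- Let (Γ,+,d) be a metric Abelian monoid whose pseudometric d is homogeneous. Then the cancellation property holds: for all γ₁,γ₂,η ∈ Γ, if d(γ₁+η, γ₂+η) = 0 then d(γ₁,γ₂) = 0. -/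
open MeasureTheory Filter

/-- If the pseudometric of a metric Abelian monoid is homogeneous, then the
cancellation property holds. -/
theorem mam_homogeneous_cancellation {Γ : Type*} [AddCommMonoid Γ]
    (d : Γ → Γ → ℝ) (h : IsMetricAbelianMonoid d)
    (hhom : ∀ (n : ℕ) (γ γ' : Γ), d (n • γ) (n • γ') = (n : ℝ) * d γ γ')
    (γ₁ γ₂ η : Γ) (hzero : d (γ₁ + η) (γ₂ + η) = 0) :
    d γ₁ γ₂ = 0 := by
  obtain ⟨⟨h0, hs, ht⟩, hL⟩ := h
  have key : ∀ n : ℕ, d (n • γ₁ + η) (n • γ₂ + η) ≤ 0 := by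
    intro n
    induction n with
    | zero => simp [h0]
    | succ k ih =>
      have e1 : (k + 1) • γ₁ + η = k • γ₁ + (γ₁ + η) := by rw [succ_nsmul, add_assoc]
      have e2 : (k + 1) • γ₂ + η = γ₂ + (k • γ₂ + η) := by rw [succ_nsmul', add_assoc]
      have e3 : k • γ₁ + (γ₂ + η) = γ₂ + (k • γ₁ + η) := add_left_comm _ _ _
      have a := hL (k • γ₁) (γ₁ + η) (γ₂ + η)
      have b := hL γ₂ (k • γ₁ + η) (k • γ₂ + η)
      have c := ht (k • γ₁ + (γ₁ + η)) (k • γ₁ + (γ₂ + η)) (γ₂ + (k • γ₂ + η))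
      rw [e1, e2]
      rw [← e3] at b
      linarith
  have bound : ∀ n : ℕ, (n : ℝ) * d γ₁ γ₂ ≤ 2 * d 0 η := by
    intro n
    rw [← hhom]
    have a := hL (n • γ₁) 0 η
    have b := hL (n • γ₂) 0 η
    rw [add_zero] at a b
    have c := ht (n • γ₁) (n • γ₁ + η) (n • γ₂)
    have e := ht (n • γ₁ + η) (n • γ₂ + η) (n • γ₂)
    have f := hs (n • γ₂ + η) (n • γ₂)
    have k := key n
    linarith
  have nn : 0 ≤ d γ₁ γ₂ := by
    have a := ht γ₁ γ₂ γ₁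
    rw [h0, hs γ₂ γ₁] at a
    linarith
  by_contra hne
  have hpos : 0 < d γ₁ γ₂ := lt_of_le_of_ne nn (Ne.symm hne)
  obtain ⟨n, hn⟩ := exists_nat_gt (2 * d 0 η / d γ₁ γ₂)
  rw [div_lt_iff₀ hpos] at hn
  exact absurd (bound n) (not_le.mpr hn)
end

section
/- Every admissible function is sub-linear: if φ is admissible, then φ(t)/t → 0 as t → ∞. -/
open MeasureTheory Filter

/-- Every admissible function is sub-linear: `φ t / t → 0` as `t → ∞`. -/
theorem admissible_sublinear (φ : ℝ → ℝ) (hφ : Admissible φ) :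
    Filter.Tendsto (fun t : ℝ => φ t / t) Filter.atTop (nhds 0) := by
  obtain ⟨D, h0, hm, -, hi, -⟩ := hφ
  have h1 := intervalIntegral_tendsto_integral_Ioi (1 : ℝ) (hi 1 le_rfl) tendsto_id
  have h2 : Tendsto (fun s : ℝ => (∫ t in Set.Ioi (1 : ℝ), φ t / t ^ 2)
      - ∫ t in (1 : ℝ)..s, φ t / t ^ 2) atTop (nhds 0) := by
    have := h1.const_sub (∫ t in Set.Ioi (1 : ℝ), φ t / t ^ 2)
    simpa using this
  refine tendsto_of_tendsto_of_tendsto_of_le_of_le' tendsto_const_nhds h2 ?_ ?_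
  · filter_upwards [eventually_ge_atTop 1] with s hs
    exact div_nonneg (h0 s hs) (by linarith)
  · filter_upwards [eventually_ge_atTop 1] with s hs
    have hs0 : 0 < s := by linarith
    have e : (∫ t in Set.Ioi (1 : ℝ), φ t / t ^ 2) - ∫ t in (1 : ℝ)..s, φ t / t ^ 2
        = ∫ t in Set.Ioi s, φ t / t ^ 2 := by
      have := intervalIntegral.integral_Ioi_sub_Ioi (hi 1 le_rfl) hs
      linarith
    rw [e]
    have k : φ s / s = ∫ t in Set.Ioi s, φ s * t ^ (-2 : ℝ) := by
      rw [integral_const_mul, integral_Ioi_rpow_of_lt (by norm_num) hs0]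
      norm_num [Real.rpow_neg_one]
      rfl
    rw [k]
    refine setIntegral_mono_on
      ((integrableOn_Ioi_rpow_of_lt (by norm_num) hs0).const_mul _) (hi s hs)
      measurableSet_Ioi ?_
    intro t ht
    have ht' : s < t := ht
    have ht0 : 0 < t := by linarith
    rw [Real.rpow_neg ht0.le, div_eq_mul_inv]
    norm_cast
    exact mul_le_mul_of_nonneg_right
      (hm (Set.mem_Ici.2 hs) (Set.mem_Ici.2 (by linarith)) ht'.le) (by positivity)
end

section
/- (De Bruijn–Erdős generalization of Fekete's Lemma, as used in the paper.) Let φ be an admissible function and let a: ℕ → [0,∞) satisfy a(m+n) ≤ a(m) + a(n) + φ(m+n) for all m,n ≥ 1. Then the limit lim_{n→∞} a(n)/n exists and is finite. -/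
open MeasureTheory Filter

/-- The tail integral. -/
noncomputable def tailI (φ : ℝ → ℝ) (s : ℝ) : ℝ := ∫ t in Set.Ioi s, φ t / t ^ 2

lemma tailI_sub (φ : ℝ → ℝ) (D : ℝ) (h : AdmissibleWith φ D) (m s : ℝ) (hm : 1 ≤ m)
    (hs : m ≤ s) : φ m * (1 / m - 1 / s) ≤ tailI φ m - tailI φ s := by
  obtain ⟨h0, hmono, hD, hint, hle⟩ := h
  have hI : IntervalIntegrable (fun t => φ t / t ^ 2) volume m s := by
    rw [intervalIntegrable_iff_integrableOn_Ioc_of_le hs]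
    exact (hint m hm).mono_set Set.Ioc_subset_Ioi_self
  have e : tailI φ m - tailI φ s = ∫ t in m..s, φ t / t ^ 2 := by
    have := intervalIntegral.integral_interval_add_Ioi (μ := volume) (hint m hm)
      (hint s (hm.trans hs))
    unfold tailI
    linarith
  have hd : ∀ t ∈ Set.uIcc m s, HasDerivAt (fun t : ℝ => - (φ m) * t⁻¹) (φ m / t ^ 2) t := by
    intro t ht
    rw [Set.uIcc_of_le hs] at ht
    have ht0 : t ≠ 0 := by linarith [ht.1]
    have := (hasDerivAt_inv ht0).const_mul (-(φ m))
    have e : φ m / t ^ 2 = -(φ m) * -(t ^ 2)⁻¹ := by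
      rw [neg_mul_neg, div_eq_mul_inv]
    rw [e]
    exact this
  have hc : ContinuousOn (fun t : ℝ => φ m / t ^ 2) (Set.uIcc m s) := by
    rw [Set.uIcc_of_le hs]
    apply ContinuousOn.div (by fun_prop) (by fun_prop)
    intro t ht
    have : 0 < t := by linarith [ht.1]
    positivity
  have e2 : ∫ t in m..s, φ m / t ^ 2 = φ m * (1 / m - 1 / s) := by
    rw [intervalIntegral.integral_eq_sub_of_hasDerivAt hd hc.intervalIntegrable]
    simp only [one_div]
    ring
  rw [e, ← e2]
  apply intervalIntegral.integral_mono_on hs hc.intervalIntegrable hI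
  intro t ht
  have : φ m ≤ φ t := hmono hm (hm.trans ht.1) ht.1
  gcongr

lemma tailI_tendsto (φ : ℝ → ℝ) (D : ℝ) (h : AdmissibleWith φ D) :
    Tendsto (tailI φ) atTop (nhds 0) := by
  obtain ⟨h0, hmono, hD, hint, hle⟩ := h
  have h1 := intervalIntegral_tendsto_integral_Ioi (1 : ℝ) (hint 1 le_rfl) tendsto_id
  have h2 := h1.const_sub (tailI φ 1)
  have h3 : tailI φ 1 - ∫ t in Set.Ioi (1 : ℝ), φ t / t ^ 2 = 0 := sub_self _
  rw [h3] at h2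
  refine h2.congr' ?_
  filter_upwards [eventually_ge_atTop (1 : ℝ)] with s hs
  have := intervalIntegral.integral_interval_add_Ioi (μ := volume) (hint 1 le_rfl) (hint s hs)
  unfold tailI
  simp only [id]
  linarith

lemma tailI_nonneg (φ : ℝ → ℝ) (D : ℝ) (h : AdmissibleWith φ D) (s : ℝ) (hs : 1 ≤ s) :
    0 ≤ tailI φ s := by
  refine setIntegral_nonneg measurableSet_Ioi fun t ht => ?_
  have ht' : s < t := ht
  exact div_nonneg (h.1 t (by linarith)) (by positivity)

lemma tailI_ge (φ : ℝ → ℝ) (D : ℝ) (h : AdmissibleWith φ D) (m : ℝ) (hm : 1 ≤ m) :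
    φ m ≤ m * tailI φ m := by
  have h1 : Tendsto (fun s : ℝ => φ m * (1 / m - 1 / s)) atTop (nhds (φ m * (1 / m - 0))) := by
    simp only [one_div]
    exact (tendsto_inv_atTop_zero.const_sub _).const_mul _
  have h2 := le_of_tendsto h1 (b := tailI φ m) (by
    filter_upwards [eventually_ge_atTop m] with s hs
    have := tailI_sub φ D h m s hm hs
    linarith [tailI_nonneg φ D h s (hm.trans hs)])
  have hm0 : 0 < m := by linarith
  have := mul_le_mul_of_nonneg_left h2 hm0.le
  have e : m * (φ m * (1 / m - 0)) = φ m := by field_simp; ring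
  linarith

lemma tailI_anti (φ : ℝ → ℝ) (D : ℝ) (h : AdmissibleWith φ D) (m s : ℝ) (hm : 1 ≤ m)
    (hs : m ≤ s) : tailI φ s ≤ tailI φ m := by
  have := tailI_sub φ D h m s hm hs
  have h1 : 1 / s ≤ 1 / m := one_div_le_one_div_of_le (by linarith) hs
  nlinarith [h.1 m hm]

lemma psi_balanced (φ : ℝ → ℝ) (D : ℝ) (h : AdmissibleWith φ D) (M N : ℝ) (hM : 1 ≤ M)
    (hMN : M ≤ N) (hN : N ≤ 2 * M) :
    φ (M + N) + D * ((M + N) * tailI φ (M + N)) ≤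
      D * (M * tailI φ M) + D * (N * tailI φ N) := by
  have hD := h.2.2.1
  have a1 : φ (M + N) ≤ φ (4 * M) :=
    h.2.1 (Set.mem_Ici.2 (by linarith)) (Set.mem_Ici.2 (by linarith)) (by linarith)
  have a2 := tailI_ge φ D h (4 * M) (by linarith)
  have a3 := tailI_anti φ D h M (4 * M) hM (by linarith)
  have a4 : M * tailI φ M ≤ D / 8 * φ M := h.2.2.2.2 M hM
  have a5 : φ (M + N) ≤ D / 2 * φ M := by nlinarith
  have b1 := tailI_sub φ D h M (M + N) hM (by linarith)
  have b2 := tailI_anti φ D h N (M + N) (by linarith) (by linarith)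
  have hM0 : 0 < M := by linarith
  have hφ := h.1 M hM
  have b3 : φ M / 2 ≤ M * (tailI φ M - tailI φ (M + N)) := by
    refine le_trans ?_ (mul_le_mul_of_nonneg_left b1 hM0.le)
    have e : M * (φ M * (1 / M - 1 / (M + N))) = φ M * (N / (M + N)) := by
      have : M + N ≠ 0 := by linarith
      field_simp
      ring
    rw [e, div_eq_mul_one_div]
    apply mul_le_mul_of_nonneg_left _ hφ
    rw [div_le_div_iff₀ (by norm_num) (by linarith)]
    linarith
  have b4 : 0 ≤ N * (tailI φ N - tailI φ (M + N)) :=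
    mul_nonneg (by linarith) (by linarith)
  have b5 := mul_le_mul_of_nonneg_left (add_le_add b3 b4) hD
  linarith

lemma multiples (φ : ℝ → ℝ) (D : ℝ) (h : AdmissibleWith φ D) (a : ℕ → ℝ)
    (hsub : ∀ m n : ℕ, 1 ≤ m → 1 ≤ n →
      a (m + n) ≤ a m + a n + φ ((m + n : ℕ) : ℝ)) (k : ℕ) (hk : 1 ≤ k) (q : ℕ) :
    1 ≤ q → a (q * k) + D * (((q * k : ℕ) : ℝ) * tailI φ ((q * k : ℕ) : ℝ)) ≤
      q * (a k + D * ((k : ℝ) * tailI φ k)) := by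
  induction q using Nat.strong_induction_on with
  | _ q ih =>
    intro hq
    rcases Nat.lt_or_ge q 2 with h2 | h2
    · obtain rfl : q = 1 := by omega
      simp
    · obtain ⟨m, n, hm, hmn, hn, rfl⟩ : ∃ m n, 1 ≤ m ∧ m ≤ n ∧ n ≤ 2 * m ∧ q = m + n :=
        ⟨q / 2, q - q / 2, by omega, by omega, by omega, by omega⟩
      have i1 := ih m (by omega) hm
      have i2 := ih n (by omega) (by omega)
      have hmk : 1 ≤ m * k := Nat.mul_pos hm hk
      have hnk : 1 ≤ n * k := Nat.mul_pos (by omega) hk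
      have j := hsub (m * k) (n * k) hmk hnk
      have c1 : m * k ≤ n * k := Nat.mul_le_mul_right k hmn
      have c2 : n * k ≤ 2 * (m * k) := by
        rw [← mul_assoc]; exact Nat.mul_le_mul_right k hn
      have p := psi_balanced φ D h ((m * k : ℕ) : ℝ) ((n * k : ℕ) : ℝ)
        (by exact_mod_cast hmk) (by exact_mod_cast c1) (by exact_mod_cast c2)
      rw [← Nat.cast_add] at p
      rw [add_mul m n k]
      rw [Nat.cast_add m n, add_mul (m : ℝ)]
      linarith

/-- De Bruijn–Erdős generalization of Fekete's Lemma: if `a : ℕ → [0,∞)` is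
subadditive up to an admissible function `φ`, then `a n / n` converges to a
finite limit. -/
theorem deBruijn_erdos_fekete (φ : ℝ → ℝ) (hφ : Admissible φ)
    (a : ℕ → ℝ) (ha0 : ∀ n, 0 ≤ a n)
    (hsub : ∀ m n : ℕ, 1 ≤ m → 1 ≤ n →
      a (m + n) ≤ a m + a n + φ ((m + n : ℕ) : ℝ)) :
    ∃ L : ℝ, Filter.Tendsto (fun n : ℕ => a n / n) Filter.atTop (nhds L) := by
  obtain ⟨D, h⟩ := hφ
  have hD := h.2.2.1
  set v : ℕ → ℝ := fun k => a k / k + D * tailI φ k with hv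
  have hT : Tendsto (fun n : ℕ => tailI φ n) atTop (nhds 0) :=
    (tailI_tendsto φ D h).comp tendsto_natCast_atTop_atTop
  have hv0 : ∀ k : ℕ, 1 ≤ k → 0 ≤ v k := fun k hk =>
    add_nonneg (div_nonneg (ha0 k) (by positivity))
      (mul_nonneg hD (tailI_nonneg φ D h k (by exact_mod_cast hk)))
  have key : ∀ k : ℕ, 1 ≤ k → ∃ B : ℝ, ∀ n : ℕ, 2 * k ≤ n →
      a n / n ≤ v k + B / n + tailI φ n := by
    intro k hk
    refine ⟨∑ r ∈ Finset.range (2 * k), a r, fun n hn => ?_⟩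
    obtain ⟨q, r, hq, hr, hr2, rfl⟩ : ∃ q r, 1 ≤ q ∧ 1 ≤ r ∧ r < 2 * k ∧ n = q * k + r := by
      have h2 : 2 ≤ n / k := (Nat.le_div_iff_mul_le hk).2 hn
      refine ⟨n / k - 1, n % k + k, by omega, by omega, ?_, ?_⟩
      · have := Nat.mod_lt n hk
        omega
      · have e := Nat.div_add_mod' n k
        obtain ⟨p, hp⟩ : ∃ p, n / k = p + 1 := ⟨n / k - 1, by omega⟩
        rw [hp] at e ⊢
        simp only [Nat.add_sub_cancel]
        linarith
    have hqk : 1 ≤ q * k := Nat.mul_pos hq hk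
    have s1 := hsub (q * k) r hqk hr
    have s2 := multiples φ D h a hsub k hk q hq
    have s3 : 0 ≤ D * (((q * k : ℕ) : ℝ) * tailI φ ((q * k : ℕ) : ℝ)) :=
      mul_nonneg hD (mul_nonneg (by positivity)
        (tailI_nonneg φ D h _ (by exact_mod_cast hqk)))
    have s4 : a r ≤ ∑ r ∈ Finset.range (2 * k), a r :=
      Finset.single_le_sum (fun i _ => ha0 i) (Finset.mem_range.2 hr2)
    have s5 := tailI_ge φ D h ((q * k + r : ℕ) : ℝ) (by exact_mod_cast (by omega))
    have hk0 : (0 : ℝ) < k := by exact_mod_cast hk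
    have s6 : q * (a k + D * ((k : ℝ) * tailI φ k)) = ((q * k : ℕ) : ℝ) * v k := by
      simp only [hv]
      push_cast
      field_simp
    have s7 : ((q * k : ℕ) : ℝ) * v k ≤ ((q * k + r : ℕ) : ℝ) * v k :=
      mul_le_mul_of_nonneg_right (by exact_mod_cast (by omega)) (hv0 k hk)
    have hn0 : (0 : ℝ) < ((q * k + r : ℕ) : ℝ) := by exact_mod_cast (by omega)
    generalize ((q * k + r : ℕ) : ℝ) = x at *
    rw [div_le_iff₀ hn0]
    have e : ∀ B T w : ℝ, (w + B / x + T) * x = x * w + B + x * T := by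
      intro B T w
      field_simp
    rw [e]
    linarith
  set S : Set ℝ := v '' Set.Ici 1 with hS
  have hbdd : BddBelow S := ⟨0, by rintro _ ⟨k, hk, rfl⟩; exact hv0 k hk⟩
  have hne : S.Nonempty := ⟨v 1, 1, Set.mem_Ici.2 le_rfl, rfl⟩
  refine ⟨sInf S, ?_⟩
  rw [tendsto_order]
  constructor
  · intro b hb
    have h1 : Tendsto (fun n : ℕ => sInf S - D * tailI φ n) atTop (nhds (sInf S - D * 0)) :=
      (hT.const_mul D).const_sub _
    rw [mul_zero, sub_zero] at h1
    filter_upwards [h1.eventually (lt_mem_nhds hb), eventually_ge_atTop 1] with n hn hn1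
    have : sInf S ≤ v n := csInf_le hbdd ⟨n, hn1, rfl⟩
    simp only [hv] at this
    linarith
  · intro b hb
    obtain ⟨_, ⟨k, hk, rfl⟩, hkb⟩ := exists_lt_of_csInf_lt hne hb
    obtain ⟨B, hB⟩ := key k hk
    have h1 : Tendsto (fun n : ℕ => v k + B / n + tailI φ n) atTop (nhds (v k + 0 + 0)) :=
      ((tendsto_const_div_atTop_nhds_zero_nat B).const_add _).add hT
    rw [add_zero, add_zero] at h1
    filter_upwards [h1.eventually (gt_mem_nhds hkb), eventually_ge_atTop (2 * k)] with n hn hn1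
    exact (hB n hn1).trans_lt hn
end

section
/- Let (Γ,+,d) be a metric Abelian monoid, let φ₁, φ₂ be admissible functions, and let γ̄₁ be a quasi-linear sequence with defect bounded by φ₁ and γ̄₂ a quasi-linear sequence with defect bounded by φ₂. Then the limit dista(γ̄₁,γ̄₂) := lim_{n→∞} (1/n)·d(γ₁(n), γ₂(n)) exists and is finite. -/
open MeasureTheory Filter

theorem aux_integral (φ : ℝ → ℝ) (D : ℝ) (hφ : AdmissibleWith φ D) :
    ∃ I : ℝ → ℝ, (∀ s, 1 ≤ s → 0 ≤ I s) ∧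
      (∀ s, 1 ≤ s → φ s ≤ 2 * s * (I s - I (2 * s))) ∧
      Tendsto (fun n : ℕ => I (n : ℝ)) atTop (nhds 0) := by
  obtain ⟨h0, hm, -, hi, -⟩ := hφ
  refine ⟨fun s => ∫ t in Set.Ioi s, φ t / t ^ 2, ?_, ?_, ?_⟩
  · intro s hs
    refine setIntegral_nonneg measurableSet_Ioi fun t ht => ?_
    have : s < t := ht
    exact div_nonneg (h0 t (by linarith)) (sq_nonneg t)
  · intro s hs
    have h2 : s ≤ 2 * s := by linarith
    have hsplit : (∫ t in Set.Ioi s, φ t / t ^ 2)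
        = (∫ t in Set.Ioc s (2 * s), φ t / t ^ 2) + ∫ t in Set.Ioi (2 * s), φ t / t ^ 2 := by
      rw [← Set.Ioc_union_Ioi_eq_Ioi h2]
      exact setIntegral_union (Set.Ioc_disjoint_Ioi le_rfl) measurableSet_Ioi
        ((hi s hs).mono_set Set.Ioc_subset_Ioi_self) (hi (2 * s) (by linarith))
    have hlow : (∫ t in s..(2 * s), φ s * t ^ (-2 : ℤ)) ≤ ∫ t in s..(2 * s), φ t / t ^ 2 := by
      refine intervalIntegral.integral_mono_on h2 ?_ ?_ ?_
      · apply ContinuousOn.intervalIntegrable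
        intro t ht
        rw [Set.uIcc_of_le h2] at ht
        have : t ≠ 0 := by linarith [ht.1]
        exact (continuousAt_const.mul (continuousAt_zpow₀ t _ (Or.inl this))).continuousWithinAt
      · rw [intervalIntegrable_iff_integrableOn_Ioc_of_le h2]
        exact (hi s hs).mono_set Set.Ioc_subset_Ioi_self
      · intro t ht
        have h1 : φ s ≤ φ t := hm hs (Set.mem_Ici.2 (hs.trans ht.1)) ht.1
        have : φ s * t ^ (-2 : ℤ) = φ s / t ^ 2 := by
          rw [div_eq_mul_inv, zpow_neg]; norm_cast
        rw [this]
        gcongr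
    have hval : (∫ t in s..(2 * s), φ s * t ^ (-2 : ℤ)) = φ s / (2 * s) := by
      rw [intervalIntegral.integral_const_mul, integral_zpow]
      · have : s ≠ 0 := by linarith
        norm_num
        field_simp
        ring
      · right
        refine ⟨by norm_num, ?_⟩
        rw [Set.uIcc_of_le h2]
        intro h
        linarith [h.1]
    rw [hval, intervalIntegral.integral_of_le h2] at hlow
    simp only [hsplit, add_sub_cancel_right]
    rw [div_le_iff₀ (by linarith)] at hlow
    linarith
  · have hI := hi 1 le_rfl
    have h1 : Tendsto (fun n : ℕ => ∫ t in (1 : ℝ)..(n : ℝ), φ t / t ^ 2) atTop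
        (nhds (∫ t in Set.Ioi 1, φ t / t ^ 2)) :=
      intervalIntegral_tendsto_integral_Ioi 1 hI tendsto_natCast_atTop_atTop
    have h2 := (tendsto_const_nhds (x := ∫ t in Set.Ioi (1 : ℝ), φ t / t ^ 2)).sub h1
    rw [sub_self] at h2
    refine h2.congr' ?_
    filter_upwards [eventually_ge_atTop 1] with n hn
    have hn' : (1 : ℝ) ≤ n := by exact_mod_cast hn
    rw [intervalIntegral.integral_of_le hn']
    rw [← Set.Ioc_union_Ioi_eq_Ioi hn',
      setIntegral_union (Set.Ioc_disjoint_Ioi le_rfl) measurableSet_Ioi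
        (hI.mono_set Set.Ioc_subset_Ioi_self) (hi n hn')]
    ring

theorem aux_multiple (a : ℕ → ℝ) (φ I : ℝ → ℝ)
    (h0 : ∀ t, 1 ≤ t → 0 ≤ φ t) (hm : MonotoneOn φ (Set.Ici 1))
    (hsub : ∀ m n : ℕ, 1 ≤ m → 1 ≤ n → a (m + n) ≤ a m + a n + φ ((m + n : ℕ) : ℝ))
    (hK : ∀ s, 1 ≤ s → φ s ≤ 2 * s * (I s - I (2 * s)))
    (n : ℕ) (hn : 1 ≤ n) (J : ℕ) : ∀ k : ℕ, 1 ≤ k → k ≤ 2 ^ J →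
      a (k * n) ≤ k * a n + 2 ^ J * (2 * n) * (I (2 * n) - I (2 ^ J * (2 * n))) := by
  have hn' : (1 : ℝ) ≤ n := by exact_mod_cast hn
  induction J with
  | zero =>
    intro k hk hk2
    have : k = 1 := by simp at hk2; omega
    subst this
    simp
  | succ J ih =>
    intro k hk hk2
    have hJ1 : (1 : ℝ) ≤ 2 ^ J := one_le_pow₀ (by norm_num)
    have hs1 : (1 : ℝ) ≤ 2 ^ J * (2 * n) := by nlinarith
    have key := hK _ hs1
    have hpos := h0 _ hs1
    have e1 : (2 : ℝ) ^ (J + 1) * (2 * n) = 2 * (2 ^ J * (2 * n)) := by ring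
    rw [e1]
    have mono0 : 0 ≤ 2 ^ J * (2 * (n : ℝ)) * (I (2 * n) - I (2 ^ J * (2 * n))) := by
      have := ih 1 le_rfl Nat.one_le_two_pow
      simp at this
      exact this
    rcases Nat.lt_or_ge k 2 with h | h
    · have : k = 1 := by omega
      subst this
      simp only [Nat.cast_one, one_mul]
      linarith
    · obtain ⟨p, q, hp, hq, hpq, hp2, hq2⟩ : ∃ p q : ℕ, 1 ≤ p ∧ 1 ≤ q ∧ k = p + q ∧
          p ≤ 2 ^ J ∧ q ≤ 2 ^ J := by
        rw [pow_succ] at hk2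
        exact ⟨k / 2, k - k / 2, by omega, by omega, by omega, by omega, by omega⟩
      have ip := ih p hp hp2
      have iq := ih q hq hq2
      have hs := hsub (p * n) (q * n) (Nat.mul_pos hp hn) (Nat.mul_pos hq hn)
      rw [← add_mul, ← hpq] at hs
      have hφ : φ ((k * n : ℕ) : ℝ) ≤ φ (2 ^ J * (2 * n)) := by
        apply hm
        · have : 1 ≤ k * n := Nat.mul_pos hk hn
          simp only [Set.mem_Ici]
          exact_mod_cast this
        · exact hs1
        · have : (k : ℝ) ≤ 2 ^ (J + 1) := by exact_mod_cast hk2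
          push_cast
          calc (k : ℝ) * n ≤ 2 ^ (J + 1) * n := by gcongr
            _ = _ := by ring
      have : (k : ℝ) = p + q := by exact_mod_cast hpq
      rw [this]
      linarith

theorem aux_limit (a : ℕ → ℝ) (φ I : ℝ → ℝ) (ha : ∀ n, 0 ≤ a n)
    (h0 : ∀ t, 1 ≤ t → 0 ≤ φ t) (hm : MonotoneOn φ (Set.Ici 1))
    (hsub : ∀ m n : ℕ, 1 ≤ m → 1 ≤ n → a (m + n) ≤ a m + a n + φ ((m + n : ℕ) : ℝ))
    (hI0 : ∀ s, 1 ≤ s → 0 ≤ I s)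
    (hK : ∀ s, 1 ≤ s → φ s ≤ 2 * s * (I s - I (2 * s)))
    (hI : Tendsto (fun n : ℕ => I (n : ℝ)) atTop (nhds 0)) :
    ∃ L : ℝ, Tendsto (fun n : ℕ => a n / n) atTop (nhds L) := by
  have hmul : ∀ k n : ℕ, 1 ≤ k → 1 ≤ n → a (k * n) ≤ k * a n + 4 * k * n * I n := by
    intro k n hk hn
    have hn' : (1 : ℝ) ≤ n := by exact_mod_cast hn
    have h1 := aux_multiple a φ I h0 hm hsub hK n hn (Nat.log 2 k + 1) k hk
      (Nat.lt_pow_succ_log_self (by norm_num) k).le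
    have h2 : (2 : ℝ) ^ (Nat.log 2 k + 1) ≤ 2 * k := by
      have := Nat.pow_log_le_self 2 (x := k) (by omega)
      have : (2 : ℝ) ^ (Nat.log 2 k) ≤ k := by exact_mod_cast this
      rw [pow_succ]; linarith
    have hJ1 : (1 : ℝ) ≤ 2 ^ (Nat.log 2 k + 1) := one_le_pow₀ (by norm_num)
    have hx := hI0 (2 ^ (Nat.log 2 k + 1) * (2 * n)) (by nlinarith)
    have hmon : I (2 * n) ≤ I n := by
      have h3 := (h0 n hn').trans (hK n hn')
      have := nonneg_of_mul_nonneg_right h3 (by linarith)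
      linarith
    have hIn := hI0 n hn'
    calc a (k * n) ≤ _ := h1
      _ ≤ k * a n + 2 ^ (Nat.log 2 k + 1) * (2 * n) * I n := by gcongr; linarith
      _ ≤ k * a n + (2 * k) * (2 * n) * I n := by gcongr
      _ = _ := by ring
  have hmain : ∀ n : ℕ, 1 ≤ n → ∀ ε : ℝ, 0 < ε →
      ∀ᶠ N : ℕ in atTop, a N / N ≤ a n / n + 4 * I n + ε := by
    intro n hn ε hε
    have hn' : (1 : ℝ) ≤ n := by exact_mod_cast hn
    set M : ℝ := ∑ r ∈ Finset.range n, a r with hM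
    have hlim : Tendsto (fun N : ℕ => M / N + 2 * I N) atTop (nhds 0) := by
      have := (tendsto_const_div_atTop_nhds_zero_nat M).add (hI.const_mul 2)
      simpa using this
    filter_upwards [hlim.eventually_lt_const hε, eventually_ge_atTop n] with N hN hnN
    have hN1 : 1 ≤ N := hn.trans hnN
    have hN' : (1 : ℝ) ≤ N := by exact_mod_cast hN1
    have hφN : φ N ≤ 2 * N * I N := by
      have := hK N hN'
      have h2 := hI0 (2 * N) (by linarith)
      nlinarith
    have hk : 1 ≤ N / n := Nat.div_pos hnN hn
    have hdec : N / n * n + N % n = N := Nat.div_add_mod' N n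
    have hr : a (N % n) ≤ M :=
      Finset.single_le_sum (f := a) (fun i _ => ha i) (Finset.mem_range.2 (Nat.mod_lt _ hn))
    have haN : a N ≤ a (N / n * n) + M + φ N := by
      rcases Nat.eq_zero_or_pos (N % n) with h | h
      · have : N / n * n = N := by omega
        rw [this]
        have := h0 N hN'
        have := (ha (N % n)).trans hr
        linarith
      · have := hsub (N / n * n) (N % n) (Nat.mul_pos hk hn) h
        rw [hdec] at this
        linarith
    have hkn : ((N / n : ℕ) : ℝ) * n ≤ N := by
      exact_mod_cast Nat.div_mul_le_self N n
    have hc : 0 ≤ a n / n + 4 * I n :=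
      add_nonneg (div_nonneg (ha n) (by linarith)) (by linarith [hI0 n hn'])
    have h3 : a (N / n * n) ≤ N * (a n / n + 4 * I n) := by
      calc a (N / n * n) ≤ _ := hmul (N / n) n hk hn
        _ = ((N / n : ℕ) : ℝ) * n * (a n / n + 4 * I n) := by field_simp
        _ ≤ _ := by gcongr
    have h4 : a N / N ≤ (a n / n + 4 * I n) + (M / N + 2 * I N) := by
      rw [div_le_iff₀ (by linarith)]
      have : M / N * N = M := by field_simp
      linarith
    linarith
  have hbdd : IsBoundedUnder (· ≤ ·) atTop (fun n : ℕ => a n / n) :=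
    ⟨_, eventually_map.2 (hmain 1 le_rfl 1 one_pos)⟩
  have hnn : ∀ n : ℕ, 0 ≤ a n / n := fun n => div_nonneg (ha n) (Nat.cast_nonneg n)
  have hcobdd : IsCoboundedUnder (· ≤ ·) atTop (fun n : ℕ => a n / n) :=
    IsBoundedUnder.isCoboundedUnder_le ⟨0, eventually_map.2 (Eventually.of_forall hnn)⟩
  refine ⟨limsup (fun n : ℕ => a n / n) atTop, ?_⟩
  have hle : ∀ n : ℕ, 1 ≤ n → limsup (fun n : ℕ => a n / n) atTop ≤ a n / n + 4 * I n := by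
    intro n hn
    refine le_of_forall_pos_le_add fun ε hε => ?_
    exact limsup_le_of_le hcobdd (hmain n hn ε hε)
  rw [tendsto_order]
  constructor
  · intro b hb
    have h4 : Tendsto (fun n : ℕ => 4 * I n) atTop (nhds 0) := by simpa using hI.const_mul 4
    filter_upwards [h4.eventually_lt_const (sub_pos.2 hb), eventually_ge_atTop 1] with n h1 h2
    have := hle n h2
    linarith
  · intro b hb
    exact eventually_lt_of_limsup_lt hb hbdd

/-- For quasi-linear sequences `γ₁, γ₂` in a metric Abelian monoid, the
asymptotic distance `lim_{n→∞} d (γ₁ n) (γ₂ n) / n` exists and is finite. -/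
theorem dista_exists {Γ : Type*} [AddCommMonoid Γ] (d : Γ → Γ → ℝ)
    (h : IsMetricAbelianMonoid d)
    (φ₁ φ₂ : ℝ → ℝ) (hφ₁ : Admissible φ₁) (hφ₂ : Admissible φ₂)
    (γ₁ γ₂ : ℕ → Γ)
    (hγ₁ : QuasiLinear d φ₁ γ₁) (hγ₂ : QuasiLinear d φ₂ γ₂) :
    ∃ L : ℝ, Filter.Tendsto (fun n : ℕ => d (γ₁ n) (γ₂ n) / n)
      Filter.atTop (nhds L) := by
  obtain ⟨⟨hd0, hds, hdt⟩, hl⟩ := h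
  obtain ⟨D₁, hA₁⟩ := hφ₁
  obtain ⟨D₂, hA₂⟩ := hφ₂
  obtain ⟨I₁, hp₁, hK₁, ht₁⟩ := aux_integral φ₁ D₁ hA₁
  obtain ⟨I₂, hp₂, hK₂, ht₂⟩ := aux_integral φ₂ D₂ hA₂
  refine aux_limit (fun n => d (γ₁ n) (γ₂ n)) (fun t => φ₁ t + φ₂ t) (fun t => I₁ t + I₂ t)
    ?_ ?_ ?_ ?_ ?_ ?_ ?_
  · intro n
    have h1 := hdt (γ₁ n) (γ₂ n) (γ₁ n)
    rw [hd0, hds (γ₂ n)] at h1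
    show 0 ≤ d (γ₁ n) (γ₂ n)
    linarith
  · intro t ht
    exact add_nonneg (hA₁.1 t ht) (hA₂.1 t ht)
  · exact hA₁.2.1.add hA₂.2.1
  · intro m n hm hn
    show d (γ₁ (m + n)) (γ₂ (m + n)) ≤ d (γ₁ m) (γ₂ m) + d (γ₁ n) (γ₂ n) + (_ + _)
    have q₁ := hγ₁.2 m n hm hn
    have q₂ := hγ₂.2 m n hm hn
    rw [hds] at q₂
    have t1 := hdt (γ₁ (m + n)) (γ₁ m + γ₁ n) (γ₂ (m + n))
    have t2 := hdt (γ₁ m + γ₁ n) (γ₂ m + γ₂ n) (γ₂ (m + n))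
    have t3 := hdt (γ₁ m + γ₁ n) (γ₁ m + γ₂ n) (γ₂ m + γ₂ n)
    have l1 := hl (γ₁ m) (γ₁ n) (γ₂ n)
    have l2 := hl (γ₂ n) (γ₁ m) (γ₂ m)
    rw [add_comm (γ₂ n) (γ₁ m), add_comm (γ₂ n) (γ₂ m)] at l2
    linarith
  · intro s hs
    exact add_nonneg (hp₁ s hs) (hp₂ s hs)
  · intro s hs
    have := hK₁ s hs
    have := hK₂ s hs
    show φ₁ s + φ₂ s ≤ 2 * s * ((I₁ s + I₂ s) - (I₁ (2 * s) + I₂ (2 * s)))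
    linarith
  · simpa using ht₁.add ht₂
end

section
/- Let (Γ,+,d) be a metric Abelian monoid, φ an admissible function, and γ̄ a quasi-linear sequence with defect bounded by φ. Then for all m,n ∈ ℕ with m,n ≥ 1, d(γ(m·n), m•γ(n)) ≤ 8·m·n·∫_n^{2mn} φ(t)/t² dt. -/
open MeasureTheory Filter

theorem qh_int {φ : ℝ → ℝ} (hφ : Admissible φ) {x y : ℝ} (hx : 1 ≤ x) (hxy : x ≤ y) :
    IntervalIntegrable (fun t => φ t / t ^ 2) volume x y := by
  obtain ⟨D, _, _, _, h, _⟩ := hφ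
  rw [intervalIntegrable_iff_integrableOn_Ioc_of_le hxy]
  exact (h x hx).mono_set Set.Ioc_subset_Ioi_self

theorem qh_nonneg {φ : ℝ → ℝ} (hφ : Admissible φ) {x y : ℝ} (hx : 1 ≤ x) (hxy : x ≤ y) :
    0 ≤ ∫ t in x..y, φ t / t ^ 2 := by
  obtain ⟨D, h, _⟩ := hφ
  apply intervalIntegral.integral_nonneg hxy
  intro t ht
  have := h t (hx.trans ht.1)
  positivity

theorem qh_lower {φ : ℝ → ℝ} (hφ : Admissible φ) {x y c : ℝ} (hx : 1 ≤ x) (hxy : x ≤ y)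
    (hc : c ≤ φ x) : c * (1 / x - 1 / y) ≤ ∫ t in x..y, φ t / t ^ 2 := by
  have hd : ∀ t ∈ Set.uIcc x y, HasDerivAt (fun t : ℝ => -c * t⁻¹) (c / t ^ 2) t := by
    intro t ht
    rw [Set.uIcc_of_le hxy] at ht
    have ht0 : t ≠ 0 := by linarith [ht.1]
    have := (hasDerivAt_inv ht0).const_mul (-c)
    refine HasDerivAt.congr_deriv this ?_
    ring
  have hi : IntervalIntegrable (fun t : ℝ => c / t ^ 2) volume x y := by
    apply ContinuousOn.intervalIntegrable
    rw [Set.uIcc_of_le hxy]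
    apply ContinuousOn.div continuousOn_const (by fun_prop)
    intro t ht
    have : 0 < t := by linarith [ht.1]
    positivity
  have he := intervalIntegral.integral_eq_sub_of_hasDerivAt hd hi
  calc c * (1 / x - 1 / y) = ∫ t in x..y, c / t ^ 2 := by rw [he]; ring
    _ ≤ _ := by
      apply intervalIntegral.integral_mono_on hxy hi (qh_int hφ hx hxy)
      intro t ht
      obtain ⟨D, _, hm, _⟩ := hφ
      have := hm (Set.mem_Ici.2 hx) (Set.mem_Ici.2 (hx.trans ht.1)) ht.1
      gcongr
      linarith

/-- Quasi-homogeneity of quasi-linear sequences: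
`d (γ (m*n)) (m • γ n) ≤ 8 m n ∫_n^{2mn} φ(t)/t² dt`. -/
theorem quasilinear_quasihomogeneous {Γ : Type*} [AddCommMonoid Γ]
    (d : Γ → Γ → ℝ) (h : IsMetricAbelianMonoid d)
    (φ : ℝ → ℝ) (hφ : Admissible φ)
    (γ : ℕ → Γ) (hγ : QuasiLinear d φ γ)
    (m n : ℕ) (hm : 1 ≤ m) (hn : 1 ≤ n) :
    d (γ (m * n)) (m • γ n) ≤
      8 * (m : ℝ) * (n : ℝ) * ∫ t in (n : ℝ)..(2 * (m : ℝ) * (n : ℝ)), φ t / t ^ 2 := by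
  obtain ⟨⟨h0, hsymm, htri⟩, hlip⟩ := h
  have hn' : (1 : ℝ) ≤ n := by exact_mod_cast hn
  induction m using Nat.strong_induction_on with
  | _ m ih =>
  rcases Nat.lt_or_ge m 2 with h2 | h2
  · have : m = 1 := by omega
    subst this
    simp only [one_mul, one_smul, h0, Nat.cast_one, mul_one]
    have := qh_nonneg hφ hn' (show (n : ℝ) ≤ 2 * n by linarith)
    positivity
  obtain ⟨a, b, hab, hb, hba, h3⟩ : ∃ a b : ℕ, m = a + b ∧ 1 ≤ b ∧ b ≤ a ∧ m ≤ 3 * b ∧ True :=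
    ⟨m - m / 2, m / 2, by omega, by omega, by omega, by omega, trivial⟩
  replace h3 := h3.1
  have iha := ih a (by omega) (by omega)
  have ihb := ih b (by omega) hb
  have hq := hγ.2 (a * n) (b * n) (Nat.mul_pos (by omega) hn) (Nat.mul_pos (by omega) hn)
  have hbR : (1 : ℝ) ≤ b := by exact_mod_cast hb
  have hbaR : (b : ℝ) ≤ a := by exact_mod_cast hba
  have h3R : (m : ℝ) ≤ 3 * b := by exact_mod_cast h3
  have habR : (m : ℝ) = a + b := by exact_mod_cast hab
  rw [← add_mul, ← hab] at hq
  have hdist : d (γ (m * n)) (m • γ n) ≤ φ ((m * n : ℕ) : ℝ) + d (γ (a * n)) (a • γ n)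
      + d (γ (b * n)) (b • γ n) := by
    have t1 := htri (γ (m * n)) (γ (a * n) + γ (b * n)) (m • γ n)
    have t2 := htri (γ (a * n) + γ (b * n)) (γ (a * n) + b • γ n) (m • γ n)
    have t3 := hlip (γ (a * n)) (γ (b * n)) (b • γ n)
    have t4 := hlip (b • γ n) (γ (a * n)) (a • γ n)
    have e : m • γ n = b • γ n + a • γ n := by rw [hab, add_smul, add_comm]
    rw [← e, add_comm (b • γ n)] at t4
    linarith
  have hn0 : (0 : ℝ) < n := by linarith
  have ha0 : (0 : ℝ) < a := by linarith
  have hb0 : (0 : ℝ) < b := by linarith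
  have la : (n : ℝ) ≤ 2 * a * n := by nlinarith
  have lb : (n : ℝ) ≤ 2 * b * n := by nlinarith
  have lam : 2 * (a : ℝ) * n ≤ 2 * m * n := by rw [habR]; nlinarith
  have lbm : 2 * (b : ℝ) * n ≤ 2 * m * n := by rw [habR]; nlinarith
  have hmn1 : (1 : ℝ) ≤ m * n := by rw [habR]; nlinarith
  have hmono : φ ((m * n : ℕ) : ℝ) ≤ φ (2 * a * n) := by
    obtain ⟨D, _, hm, _⟩ := hφ
    push_cast
    apply hm (Set.mem_Ici.2 hmn1) (Set.mem_Ici.2 (hn'.trans la))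
    rw [habR]; nlinarith
  have hpos : 0 ≤ φ ((m * n : ℕ) : ℝ) := by
    obtain ⟨D, hp, _⟩ := hφ
    apply hp
    push_cast
    exact hmn1
  have hl := qh_lower hφ (hn'.trans la) lam hmono
  have sa := intervalIntegral.integral_add_adjacent_intervals (qh_int hφ hn' la)
    (qh_int hφ (hn'.trans la) lam)
  have sb := intervalIntegral.integral_add_adjacent_intervals (qh_int hφ hn' lb)
    (qh_int hφ (hn'.trans lb) lbm)
  have hnb := qh_nonneg hφ (hn'.trans lb) lbm
  set P := φ ((m * n : ℕ) : ℝ)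
  set I := ∫ t in (n : ℝ)..(2 * (m : ℝ) * (n : ℝ)), φ t / t ^ 2
  set Ia := ∫ t in (n : ℝ)..(2 * (a : ℝ) * (n : ℝ)), φ t / t ^ 2
  set Ib := ∫ t in (n : ℝ)..(2 * (b : ℝ) * (n : ℝ)), φ t / t ^ 2
  have hA : P ≤ 8 * a * n * (I - Ia) := by
    have k : P * (1 / (2 * a * n) - 1 / (2 * m * n)) ≤ I - Ia := by linarith
    have k2 : 8 * a * n * (P * (1 / (2 * a * n) - 1 / (2 * m * n))) ≤ 8 * a * n * (I - Ia) := by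
      gcongr
    refine le_trans ?_ k2
    have e : 8 * a * n * (P * (1 / (2 * a * n) - 1 / (2 * m * n))) = P * (4 * b / (a + b)) := by
      rw [habR]
      field_simp
      ring
    rw [e]
    apply le_mul_of_one_le_right hpos
    rw [le_div_iff₀ (by linarith)]
    linarith
  have hB : 0 ≤ 8 * b * n * (I - Ib) := by
    have : 0 ≤ I - Ib := by linarith
    positivity
  have e : 8 * (m : ℝ) * n * I = 8 * a * n * I + 8 * b * n * I := by rw [habR]; ring
  rw [e]
  linarith
end

section
/- Let (Γ,+,d) be a metric Abelian monoid, φ an admissible function with admissibility constant D_φ, and γ̄ a quasi-linear sequence with defect bounded by φ. Then for all m,n ∈ ℕ with m,n ≥ 1, d(γ(m·n), m•γ(n)) ≤ 8·m·n·∫_n^∞ φ(t)/t² dt ≤ D_φ·m·φ(n). -/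
open MeasureTheory Filter

theorem aux_key (φ : ℝ → ℝ) (D : ℝ) (hφ : AdmissibleWith φ D) (N : ℝ) (hN : 1 ≤ N) :
    φ N ≤ 4 * N * ((∫ t in Set.Ioi N, φ t / t ^ 2) - ∫ t in Set.Ioi (2 * N), φ t / t ^ 2) := by
  obtain ⟨h0, hmono, hD, hint, -⟩ := hφ
  have hI := hint N hN
  have hsub : Set.Ioc N (2 * N) ⊆ Set.Ioi N := Set.Ioc_subset_Ioi_self
  have hI1 : IntegrableOn (fun t => φ t / t ^ 2) (Set.Ioc N (2 * N)) := hI.mono_set hsub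
  have hI2 := hint (2 * N) (by linarith)
  have hu : (∫ t in Set.Ioi N, φ t / t ^ 2) =
      (∫ t in Set.Ioc N (2 * N), φ t / t ^ 2) + ∫ t in Set.Ioi (2 * N), φ t / t ^ 2 := by
    rw [← setIntegral_union Set.Ioc_disjoint_Ioi_same measurableSet_Ioi hI1 hI2,
      Set.Ioc_union_Ioi_eq_Ioi (by linarith)]
  have hlow : (∫ _t in Set.Ioc N (2 * N), φ N / (2 * N) ^ 2) ≤
      ∫ t in Set.Ioc N (2 * N), φ t / t ^ 2 := by
    apply setIntegral_mono_on _ hI1 measurableSet_Ioc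
    · intro t ht
      have h1 : φ N ≤ φ t := hmono (by simpa using hN)
        (by have := ht.1; simp only [Set.mem_Ici]; linarith) ht.1.le
      have h2 := h0 N hN
      have h3 : 0 < t := by linarith [ht.1]
      have h4 := ht.2
      gcongr
      linarith
    · exact integrableOn_const (by simp)
  have hc : (∫ _t in Set.Ioc N (2 * N), φ N / (2 * N) ^ 2) = φ N / (4 * N) := by
    rw [setIntegral_const, measureReal_def, Real.volume_Ioc,
      ENNReal.toReal_ofReal (by linarith), smul_eq_mul]
    field_simp
    ring
  rw [hc, div_le_iff₀ (by linarith)] at hlow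
  rw [hu]
  linarith

theorem aux_tree {Γ : Type*} [AddCommMonoid Γ]
    (d : Γ → Γ → ℝ) (h : IsMetricAbelianMonoid d)
    (φ : ℝ → ℝ) (D : ℝ) (hφ : AdmissibleWith φ D)
    (γ : ℕ → Γ) (hγ : QuasiLinear d φ γ) (n : ℕ) (hn : 1 ≤ n) (k : ℕ) :
    ∀ m : ℕ, 1 ≤ m → m ≤ 2 ^ k → d (γ (m * n)) (m • γ n) ≤
      2 ^ k * (4 * n) * ((∫ t in Set.Ioi (n : ℝ), φ t / t ^ 2) -
        ∫ t in Set.Ioi ((2 : ℝ) ^ (k + 1) * n), φ t / t ^ 2) := by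
  have hn' : (1 : ℝ) ≤ n := by exact_mod_cast hn
  obtain ⟨⟨hd0, hds, hdt⟩, hL⟩ := h
  have one : ∀ k : ℕ, (0 : ℝ) ≤ 2 ^ k * (4 * n) * ((∫ t in Set.Ioi (n : ℝ), φ t / t ^ 2) -
        ∫ t in Set.Ioi ((2 : ℝ) ^ (k + 1) * n), φ t / t ^ 2) := by
    intro k
    have : (∫ t in Set.Ioi ((2 : ℝ) ^ (k + 1) * n), φ t / t ^ 2) ≤
        ∫ t in Set.Ioi (n : ℝ), φ t / t ^ 2 := by
      apply setIntegral_mono_set (hφ.2.2.2.1 _ hn')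
      · filter_upwards [ae_restrict_mem measurableSet_Ioi] with t ht
        have := hφ.1 t (by have : (n : ℝ) < t := ht
                           linarith)
        simp only [Pi.zero_apply]
        positivity
      · apply HasSubset.Subset.eventuallyLE
        apply Set.Ioi_subset_Ioi
        have := one_le_pow₀ (n := k + 1) (one_le_two (α := ℝ))
        nlinarith
    have := sub_nonneg.2 this
    positivity
  induction k with
  | zero =>
    intro m hm hm'
    obtain rfl : m = 1 := by simp at hm'; omega
    have := one 0
    simpa [hd0] using this
  | succ k ih =>
    intro m hm hm'
    by_cases h1 : m = 1
    · subst h1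
      have := one (k + 1)
      simpa [hd0] using this
    have hp : 2 ^ (k + 1) = 2 * 2 ^ k := by ring
    obtain ⟨a, b, rfl, ha, hb, ha', hb'⟩ : ∃ a b, m = a + b ∧ 1 ≤ a ∧ 1 ≤ b ∧ a ≤ 2 ^ k ∧ b ≤ 2 ^ k :=
      ⟨m / 2, m - m / 2, by omega, by omega, by omega, by omega, by omega⟩
    have iha := ih a ha ha'
    have ihb := ih b hb hb'
    have hN : (1 : ℝ) ≤ 2 ^ (k + 1) * n := one_le_mul_of_one_le_of_one_le
      (one_le_pow₀ one_le_two) hn'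
    have key := aux_key φ D hφ _ hN
    have hq := hγ.2 (a * n) (b * n) (Nat.mul_pos ha hn) (Nat.mul_pos hb hn)
    rw [← add_mul] at hq
    have hab : ((a + b : ℕ) : ℝ) ≤ 2 ^ (k + 1) := by exact_mod_cast hm'
    have hmon : φ (((a + b) * n : ℕ) : ℝ) ≤ φ (2 ^ (k + 1) * n) := by
      apply hφ.2.1
      · simp only [Set.mem_Ici]
        exact_mod_cast Nat.mul_pos hm hn
      · exact hN
      · rw [Nat.cast_mul]
        gcongr
    have t1 := hdt (γ ((a + b) * n)) (γ (a * n) + γ (b * n)) ((a + b) • γ n)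
    have t2 := hdt (γ (a * n) + γ (b * n)) (γ (a * n) + b • γ n) (a • γ n + b • γ n)
    have t3 := hL (γ (a * n)) (γ (b * n)) (b • γ n)
    have t4 := hL (b • γ n) (γ (a * n)) (a • γ n)
    rw [add_comm (b • γ n), add_comm (b • γ n)] at t4
    rw [← add_smul] at t2 t4
    have e : (2 : ℝ) * (2 ^ (k + 1) * n) = 2 ^ (k + 1 + 1) * n := by ring
    rw [e] at key
    rw [pow_succ (2 : ℝ) k] at *
    linarith

/-- Quasi-homogeneity, integrated version:
`d (γ (m*n)) (m • γ n) ≤ 8 m n ∫_n^∞ φ(t)/t² dt ≤ D_φ · m · φ(n)`. -/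
theorem quasilinear_quasihomogeneous_tail {Γ : Type*} [AddCommMonoid Γ]
    (d : Γ → Γ → ℝ) (h : IsMetricAbelianMonoid d)
    (φ : ℝ → ℝ) (D : ℝ) (hφ : AdmissibleWith φ D)
    (γ : ℕ → Γ) (hγ : QuasiLinear d φ γ)
    (m n : ℕ) (hm : 1 ≤ m) (hn : 1 ≤ n) :
    d (γ (m * n)) (m • γ n) ≤
        8 * (m : ℝ) * (n : ℝ) * ∫ t in Set.Ioi (n : ℝ), φ t / t ^ 2 ∧
      8 * (m : ℝ) * (n : ℝ) * (∫ t in Set.Ioi (n : ℝ), φ t / t ^ 2) ≤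
        D * (m : ℝ) * φ (n : ℝ) := by
  have hn' : (1 : ℝ) ≤ n := by exact_mod_cast hn
  constructor
  · obtain ⟨k, hk1, hk2⟩ : ∃ k : ℕ, m ≤ 2 ^ k ∧ 2 ^ k ≤ 2 * m := by
      refine ⟨Nat.log 2 m + 1, (Nat.lt_pow_succ_log_self one_lt_two m).le, ?_⟩
      have := Nat.pow_log_le_self 2 (show m ≠ 0 by omega)
      rw [pow_succ]
      omega
    have hN : (1 : ℝ) ≤ 2 ^ (k + 1) * n := one_le_mul_of_one_le_of_one_le
      (one_le_pow₀ one_le_two) hn'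
    have nonneg : ∀ s : ℝ, 1 ≤ s → 0 ≤ ∫ t in Set.Ioi s, φ t / t ^ 2 := by
      intro s hs
      apply setIntegral_nonneg measurableSet_Ioi
      intro t ht
      have := hφ.1 t (by have : s < t := ht
                         linarith)
      positivity
    have i1 := nonneg _ hN
    have i2 := nonneg _ hn'
    have hk : (2 : ℝ) ^ k ≤ 2 * m := by exact_mod_cast hk2
    refine (aux_tree d h φ D hφ γ hγ n hn k m hm hk1).trans ?_
    calc _ ≤ (2 : ℝ) ^ k * (4 * n) * (∫ t in Set.Ioi (n : ℝ), φ t / t ^ 2) := by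
          gcongr
          linarith
      _ ≤ (2 * m) * (4 * n) * (∫ t in Set.Ioi (n : ℝ), φ t / t ^ 2) := by gcongr
      _ = _ := by ring
  · have := mul_le_mul_of_nonneg_left (hφ.2.2.2.2 n hn') (show (0 : ℝ) ≤ 8 * m by positivity)
    linarith
end

section
/- Let (Γ,+,d) be a metric Abelian monoid. For any γ₁,γ₂ ∈ Γ, the limit 𝛿(γ₁,γ₂) := lim_{n→∞} (1/n)·d(n•γ₁, n•γ₂) exists, and 𝛿(γ₁,γ₂) ≤ d(γ₁,γ₂); in other words, the map sending γ ∈ Γ to its associated linear sequence (n•γ)_{n∈ℕ}, with the asymptotic distance on linear sequences, is a contraction. -/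
open MeasureTheory Filter

/-- The map sending `γ` to its linear sequence `(n • γ)` is a contraction:
the asymptotic distance `lim_{n→∞} d (n • γ₁) (n • γ₂) / n` exists and is at
most `d γ₁ γ₂`. -/
theorem linear_sequence_contraction {Γ : Type*} [AddCommMonoid Γ]
    (d : Γ → Γ → ℝ) (h : IsMetricAbelianMonoid d) (γ₁ γ₂ : Γ) :
    ∃ L : ℝ, Filter.Tendsto (fun n : ℕ => d (n • γ₁) (n • γ₂) / n)
        Filter.atTop (nhds L) ∧ L ≤ d γ₁ γ₂ := by
  obtain ⟨⟨h0, hs, ht⟩, hl⟩ := h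
  have hnn : ∀ x y, 0 ≤ d x y := fun x y => by
    have h1 := ht x y x
    rw [h0, hs y x] at h1
    linarith
  have hsub : Subadditive (fun n : ℕ => d (n • γ₁) (n • γ₂)) := by
    intro m n
    have h1 := ht ((m + n) • γ₁) (m • γ₁ + n • γ₂) ((m + n) • γ₂)
    have h2 := hl (m • γ₁) (n • γ₁) (n • γ₂)
    have h3 := hl (n • γ₂) (m • γ₁) (m • γ₂)
    rw [add_comm (n • γ₂), add_comm (n • γ₂)] at h3
    simp only [add_nsmul] at h1 ⊢
    linarith
  have hb : BddBelow (Set.range fun n : ℕ => d (n • γ₁) (n • γ₂) / n) := by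
    refine ⟨0, ?_⟩
    rintro _ ⟨n, rfl⟩
    exact div_nonneg (hnn _ _) (Nat.cast_nonneg n)
  refine ⟨hsub.lim, hsub.tendsto_lim hb, ?_⟩
  have h1 := hsub.lim_le_div hb one_ne_zero
  simpa using h1
end

section
/- Let (Γ,+,d) be a metric Abelian monoid, φ an admissible function, C ≥ 0, and γ̄ a quasi-linear sequence with defect bounded by C·φ. Then for every m ∈ ℕ with m ≥ 1, the m-fold elementwise sum of γ̄ is asymptotically equivalent to the sequence k ↦ γ(m·k): that is, lim_{k→∞} (1/k)·d(γ(m·k), m•γ(k)) = 0. -/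
open MeasureTheory Filter

theorem admissible_div_tendsto (φ : ℝ → ℝ) (hφ : Admissible φ) :
    Filter.Tendsto (fun s : ℝ => φ s / s) Filter.atTop (nhds 0) := by
  obtain ⟨D, hpos, hmono, hD, hint, -⟩ := hφ
  have hlim : Tendsto (fun s : ℝ => ∫ t in Set.Ioi s, φ t / t ^ 2) atTop (nhds 0) := by
    have h := tendsto_setIntegral_of_antitone (μ := volume) (f := fun t => φ t / t ^ 2)
      (s := fun s : ℝ => Set.Ioi s) (fun i => measurableSet_Ioi)
      (fun a b hab => Set.Ioi_subset_Ioi hab) ⟨1, hint 1 le_rfl⟩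
    have he : (⋂ n : ℝ, Set.Ioi n) = ∅ := by
      ext x
      simp only [Set.mem_iInter, Set.mem_Ioi, Set.mem_empty_iff_false, iff_false, not_forall]
      exact ⟨x, lt_irrefl x⟩
    rw [he] at h
    simpa using h
  refine tendsto_of_tendsto_of_tendsto_of_le_of_le' tendsto_const_nhds hlim ?_ ?_
  · filter_upwards [eventually_ge_atTop (1 : ℝ)] with s hs
    exact div_nonneg (hpos s hs) (by linarith)
  · filter_upwards [eventually_ge_atTop (1 : ℝ)] with s hs
    have hs0 : (0 : ℝ) < s := by linarith
    have h1 : ∫ t in Set.Ioi s, φ s * t ^ (-2 : ℝ) = φ s / s := by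
      rw [integral_const_mul, integral_Ioi_rpow_of_lt (by norm_num) hs0]
      have : (-2 + 1 : ℝ) = -1 := by norm_num
      rw [this, Real.rpow_neg_one]
      field_simp
    rw [← h1]
    refine setIntegral_mono_on
      ((integrableOn_Ioi_rpow_of_lt (by norm_num) hs0).const_mul (φ s)) (hint s hs)
      measurableSet_Ioi ?_
    intro t ht
    have ht' : s < t := ht
    have ht0 : 0 < t := by linarith
    have h2 : t ^ (-2 : ℝ) = (t ^ 2)⁻¹ := by
      rw [Real.rpow_neg ht0.le]
      norm_num
    rw [h2, ← div_eq_mul_inv]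
    have := hmono (Set.mem_Ici.2 hs) (Set.mem_Ici.2 (hs.trans ht'.le)) ht'.le
    gcongr

theorem quasi_linear_nsmul_bound {Γ : Type*} [AddCommMonoid Γ]
    (d : Γ → Γ → ℝ) (h : IsMetricAbelianMonoid d)
    (φ : ℝ → ℝ) (hφ : Admissible φ) (C : ℝ) (hC : 0 ≤ C)
    (γ : ℕ → Γ) (hγ : QuasiLinear d (fun t => C * φ t) γ)
    (m k : ℕ) (hm : 1 ≤ m) (hk : 1 ≤ k) :
    ∀ j : ℕ, j ≤ m → d (γ (j * k)) (j • γ k) ≤ j * (C * φ ((m * k : ℕ) : ℝ)) := by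
  obtain ⟨D, hpos, hmono, -⟩ := hφ
  obtain ⟨⟨h0, hsymm, htri⟩, hlip⟩ := h
  have hmk : (1 : ℝ) ≤ ((m * k : ℕ) : ℝ) := by exact_mod_cast Nat.mul_pos hm hk
  have hP : 0 ≤ C * φ ((m * k : ℕ) : ℝ) := mul_nonneg hC (hpos _ hmk)
  intro j
  induction j with
  | zero =>
    intro _
    simp [hγ.1, h0]
  | succ j ih =>
    intro hj
    rcases Nat.eq_zero_or_pos j with rfl | hj0
    · simpa [h0] using hP
    have ih' := ih (by omega)
    have h1 := hγ.2 (j * k) k (Nat.mul_pos hj0 hk) hk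
    have h2 : d (γ (j * k) + γ k) (j • γ k + γ k) ≤ d (γ (j * k)) (j • γ k) := by
      rw [add_comm _ (γ k), add_comm _ (γ k)]
      exact hlip _ _ _
    have h3 := htri (γ (j * k + k)) (γ (j * k) + γ k) (j • γ k + γ k)
    have h4 : φ ((j * k + k : ℕ) : ℝ) ≤ φ ((m * k : ℕ) : ℝ) := by
      refine hmono (Set.mem_Ici.2 ?_) (Set.mem_Ici.2 hmk) ?_
      · exact_mod_cast (by omega : 1 ≤ j * k + k)
      · have : j * k + k ≤ m * k := by
          rw [← Nat.succ_mul]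
          exact Nat.mul_le_mul_right k hj
        exact_mod_cast this
    have h5 := mul_le_mul_of_nonneg_left h4 hC
    rw [Nat.succ_mul, succ_nsmul]
    simp only at h1
    push_cast at *
    linarith

/-- The `m`-fold elementwise sum of a quasi-linear sequence is asymptotically
equivalent to the sequence `k ↦ γ (m * k)`. -/
theorem nsmul_action_asymptotically_equivalent {Γ : Type*} [AddCommMonoid Γ]
    (d : Γ → Γ → ℝ) (h : IsMetricAbelianMonoid d)
    (φ : ℝ → ℝ) (hφ : Admissible φ) (C : ℝ) (hC : 0 ≤ C)
    (γ : ℕ → Γ) (hγ : QuasiLinear d (fun t => C * φ t) γ)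
    (m : ℕ) (hm : 1 ≤ m) :
    Filter.Tendsto (fun k : ℕ => d (γ (m * k)) (m • γ k) / k)
      Filter.atTop (nhds 0) := by
  have hnn : ∀ x y, 0 ≤ d x y := by
    intro x y
    have h1 := h.1.2.2 x y x
    rw [h.1.1 x, h.1.2.1 y x] at h1
    linarith
  have hm0 : (0 : ℝ) < m := by exact_mod_cast hm
  have hl : Tendsto (fun k : ℕ => ((m * k : ℕ) : ℝ)) atTop atTop :=
    tendsto_natCast_atTop_atTop.comp (tendsto_id.const_mul_atTop' hm)
  have hl2 := ((admissible_div_tendsto φ hφ).comp hl).const_mul ((m : ℝ) * C * m)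
  rw [mul_zero] at hl2
  refine tendsto_of_tendsto_of_tendsto_of_le_of_le' tendsto_const_nhds hl2 ?_ ?_
  · exact Eventually.of_forall fun k => div_nonneg (hnn _ _) (Nat.cast_nonneg k)
  · filter_upwards [eventually_ge_atTop 1] with k hk
    have hk0 : (0 : ℝ) < k := by exact_mod_cast hk
    have hb := quasi_linear_nsmul_bound d h φ hφ C hC γ hγ m k hm hk m le_rfl
    rw [div_le_iff₀ hk0]
    refine hb.trans (le_of_eq ?_)
    simp only [Function.comp]
    push_cast
    field_simp
end

section
/- Let (Γ,+,d) be a metric Abelian monoid, φ an admissible function, and let γ̄₁, γ̄₂ be quasi-linear sequences with defects bounded by C₁·φ and C₂·φ respectively (C₁,C₂ ≥ 0). For λ ∈ ℝ with λ ≥ 0, define the scaled sequences (λ·γ̄ᵢ)(n) := γᵢ(⌊λ·n⌋). Then the ℝ≥0-action is a homothety with respect to the asymptotic distance: lim_{n→∞} (1/n)·d(γ₁(⌊λn⌋), γ₂(⌊λn⌋)) = λ · lim_{n→∞} (1/n)·d(γ₁(n), γ₂(n)). -/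
open MeasureTheory Filter

/-- The `ℝ≥0`-action `(λ·γ̄)(n) := γ(⌊λ n⌋)` is a homothety for the asymptotic
distance: `dista (λ·γ̄₁) (λ·γ̄₂) = λ * dista γ̄₁ γ̄₂`. -/
theorem scalar_action_homothety {Γ : Type*} [AddCommMonoid Γ]
    (d : Γ → Γ → ℝ) (h : IsMetricAbelianMonoid d)
    (φ : ℝ → ℝ) (hφ : Admissible φ)
    (C₁ C₂ : ℝ) (hC₁ : 0 ≤ C₁) (hC₂ : 0 ≤ C₂)
    (γ₁ γ₂ : ℕ → Γ)
    (hγ₁ : QuasiLinear d (fun t => C₁ * φ t) γ₁)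
    (hγ₂ : QuasiLinear d (fun t => C₂ * φ t) γ₂)
    (lam : ℝ) (hlam : 0 ≤ lam)
    (L : ℝ)
    (hL : Filter.Tendsto (fun n : ℕ => d (γ₁ n) (γ₂ n) / n)
      Filter.atTop (nhds L)) :
    Filter.Tendsto (fun n : ℕ => d (γ₁ ⌊lam * (n : ℝ)⌋₊) (γ₂ ⌊lam * (n : ℝ)⌋₊) / n)
      Filter.atTop (nhds (lam * L)) := by
  rcases hlam.eq_or_lt with h0 | hpos
  · subst h0
    simp [hγ₁.1, hγ₂.1, h.1.1]
  · have hfl : Filter.Tendsto (fun n : ℕ => ⌊lam * (n : ℝ)⌋₊) Filter.atTop Filter.atTop :=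
      tendsto_nat_floor_atTop.comp (tendsto_natCast_atTop_atTop.const_mul_atTop hpos)
    have h1 := hL.comp hfl
    have h2 : Filter.Tendsto (fun n : ℕ => (⌊lam * (n : ℝ)⌋₊ : ℝ) / n) Filter.atTop (nhds lam) :=
      (tendsto_nat_floor_mul_div_atTop hlam).comp tendsto_natCast_atTop_atTop
    refine (h2.mul h1).congr' ?_
    filter_upwards [hfl.eventually_ge_atTop 1] with n hn
    have h3 : (⌊lam * (n : ℝ)⌋₊ : ℝ) ≠ 0 := by
      exact_mod_cast (by omega : ⌊lam * (n : ℝ)⌋₊ ≠ 0)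
    simp only [Function.comp]
    field_simp
end

section
/- Let (Γ,+,d) be a metric Abelian monoid and define the induced homogeneous pseudometric 𝛿(x,y) := lim_{k→∞} (1/k)·d(k•x, k•y) on Γ. Let φ be a positive admissible function. Then for any two sequences γ̄₁, γ̄₂ that are quasi-linear with respect to d with defects bounded by multiples of φ, the asymptotic distances computed with d and with 𝛿 coincide: lim_{n→∞} (1/n)·d(γ₁(n), γ₂(n)) = lim_{n→∞} (1/n)·𝛿(γ₁(n), γ₂(n)). -/
open MeasureTheory Filter

lemma dyadic_bound (f p : ℕ → ℝ) (T : ℝ) (f0 : f 0 = 0) (hp : ∀ j, 0 ≤ p j)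
    (hf : ∀ j m n : ℕ, m + n ≤ 2 ^ j → f (m + n) ≤ f m + f n + p j)
    (hT : ∀ J, ∑ i ∈ Finset.range J, p i / 2 ^ i ≤ T) (k : ℕ) :
    f k ≤ k * (f 1 + 3 * T) := by
  have h1 : ∀ j : ℕ, f (2 ^ j) ≤ 2 ^ j * (f 1 + ∑ i ∈ Finset.range (j + 1), p i / 2 ^ i) := by
    intro j
    induction j with
    | zero => simp [hp 0]
    | succ j ih =>
      have := hf (j + 1) (2 ^ j) (2 ^ j) (by rw [pow_succ]; omega)
      rw [Finset.sum_range_succ]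
      have e : (2 : ℕ) ^ j + 2 ^ j = 2 ^ (j + 1) := by rw [pow_succ]; omega
      rw [e] at this
      have e2 : (2 : ℝ) ^ (j + 1) * (p (j + 1) / 2 ^ (j + 1)) = p (j + 1) := by
        field_simp
      rw [← add_assoc, mul_add, e2]
      have e3 : (2 : ℝ) ^ (j + 1) = 2 * 2 ^ j := by rw [pow_succ]; ring
      rw [e3]
      linarith
  have h2 : ∀ j : ℕ, f (2 ^ j) ≤ 2 ^ j * (f 1 + T) := fun j =>
    (h1 j).trans (by have := hT (j + 1); gcongr)
  have h3 : ∀ j k : ℕ, k < 2 ^ j →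
      f k ≤ k * (f 1 + T) + ∑ i ∈ Finset.range j, p (i + 1) := by
    intro j
    induction j with
    | zero =>
      intro k hk
      have : k = 0 := by simpa using hk
      subst this
      simp [f0]
    | succ j ih =>
      intro k hk
      rw [Finset.sum_range_succ]
      by_cases hkj : k < 2 ^ j
      · have := ih k hkj
        have := hp (j + 1)
        linarith
      · obtain ⟨r, rfl⟩ := Nat.exists_eq_add_of_le (not_lt.1 hkj)
        have hr : r < 2 ^ j := by rw [pow_succ] at hk; omega
        have a1 := hf (j + 1) (2 ^ j) r hk.le
        have a2 := ih r hr
        have a3 := h2 j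
        push_cast
        linarith
  rcases Nat.eq_zero_or_pos k with rfl | hk
  · simp [f0]
  have hlog : 2 ^ Nat.log 2 k ≤ k := Nat.pow_log_le_self 2 hk.ne'
  have hlog2 : k < 2 ^ (Nat.log 2 k + 1) := Nat.lt_pow_succ_log_self (by norm_num) k
  set j := Nat.log 2 k with hj
  have a1 := h3 (j + 1) k hlog2
  have a2 : ∑ i ∈ Finset.range (j + 1), p (i + 1) ≤ 2 * k * T := by
    have b1 : ∑ i ∈ Finset.range (j + 1), p (i + 1)
        ≤ ∑ i ∈ Finset.range (j + 1), (2 * k : ℝ) * (p (i + 1) / 2 ^ (i + 1)) := by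
      refine Finset.sum_le_sum fun i hi => ?_
      have hij : i ≤ j := by have := Finset.mem_range.1 hi; omega
      have c1 : (2 : ℝ) ^ i ≤ k := by
        calc (2 : ℝ) ^ i ≤ 2 ^ j := pow_le_pow_right₀ (by norm_num) hij
          _ ≤ k := by exact_mod_cast hlog
      have c2 : (2 : ℝ) ^ (i + 1) ≤ 2 * k := by rw [pow_succ]; linarith
      rw [mul_div_assoc', le_div_iff₀ (by positivity), mul_comm]
      exact mul_le_mul_of_nonneg_right c2 (hp _)
    have b2 := hT (j + 2)
    rw [Finset.sum_range_succ'] at b2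
    have b3 : ∑ i ∈ Finset.range (j + 1), p (i + 1) / 2 ^ (i + 1) ≤ T := by
      have := hp 0
      have : 0 ≤ p 0 / 2 ^ 0 := by positivity
      linarith
    rw [← Finset.mul_sum] at b1
    exact b1.trans (by gcongr)
  linarith

lemma tail_fact (φ : ℝ → ℝ) (h0 : ∀ t, 1 ≤ t → 0 ≤ φ t) (hm : MonotoneOn φ (Set.Ici 1))
    (hi : ∀ s, 1 ≤ s → IntegrableOn (fun t => φ t / t ^ 2) (Set.Ioi s)) :
    ∃ G : ℝ → ℝ, (∀ s, 1 ≤ s → 0 ≤ G s) ∧ (∀ s, 1 ≤ s → φ s / (4 * s) + G (2 * s) ≤ G s) ∧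
      Tendsto (fun n : ℕ => G n) atTop (nhds 0) := by
  refine ⟨fun s => ∫ t in Set.Ioi s, φ t / t ^ 2, ?_, ?_, ?_⟩
  · intro s hs
    refine setIntegral_nonneg measurableSet_Ioi fun t ht => ?_
    have := h0 t (hs.trans (le_of_lt ht))
    positivity
  · intro s hs
    have hu : Set.Ioi s = Set.Ioc s (2 * s) ∪ Set.Ioi (2 * s) :=
      (Set.Ioc_union_Ioi_eq_Ioi (by linarith)).symm
    have hI : IntegrableOn (fun t => φ t / t ^ 2) (Set.Ioc s (2 * s)) :=
      (hi s hs).mono_set Set.Ioc_subset_Ioi_self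
    have hsplit : ∫ t in Set.Ioi s, φ t / t ^ 2 =
        (∫ t in Set.Ioc s (2 * s), φ t / t ^ 2) + ∫ t in Set.Ioi (2 * s), φ t / t ^ 2 := by
      rw [hu]
      exact setIntegral_union (Set.Ioc_disjoint_Ioi le_rfl) measurableSet_Ioi hI
        (hi _ (by linarith))
    have hlow : φ s / (4 * s) ≤ ∫ t in Set.Ioc s (2 * s), φ t / t ^ 2 := by
      have hc : ∫ t in Set.Ioc s (2 * s), φ s / (2 * s) ^ 2 = φ s / (4 * s) := by
        rw [setIntegral_const, Real.volume_real_Ioc_of_le (by linarith)]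
        have : s ≠ 0 := by linarith
        simp only [smul_eq_mul]
        field_simp
        ring
      rw [← hc]
      refine setIntegral_mono_on (integrableOn_const (by simp)) hI measurableSet_Ioc ?_
      intro t ht
      have ht1 : s < t := ht.1
      have ht2 : t ≤ 2 * s := ht.2
      have := h0 s hs
      have := hm (Set.mem_Ici.2 hs) (Set.mem_Ici.2 (hs.trans ht1.le)) ht1.le
      have : 0 < t := by linarith
      have : 0 ≤ φ t := by linarith
      gcongr
    show φ s / (4 * s) + (∫ t in Set.Ioi (2 * s), φ t / t ^ 2) ≤ ∫ t in Set.Ioi s, φ t / t ^ 2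
    linarith
  · have h1 := intervalIntegral_tendsto_integral_Ioi 1 (hi 1 le_rfl)
      (tendsto_natCast_atTop_atTop (R := ℝ))
    have h2 := (tendsto_const_nhds (x := ∫ t in Set.Ioi (1:ℝ), φ t / t ^ 2)).sub h1
    rw [sub_self] at h2
    refine h2.congr' ?_
    filter_upwards [eventually_ge_atTop 1] with n hn
    have hn' : (1 : ℝ) ≤ n := by exact_mod_cast hn
    rw [intervalIntegral.integral_of_le hn', ← Set.Ioc_union_Ioi_eq_Ioi hn',
      setIntegral_union (Set.Ioc_disjoint_Ioi le_rfl) measurableSet_Ioi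
        ((hi 1 le_rfl).mono_set Set.Ioc_subset_Ioi_self) (hi _ hn')]
    ring

lemma eps_fact (φ : ℝ → ℝ) (h0 : ∀ t, 1 ≤ t → 0 ≤ φ t) (hm : MonotoneOn φ (Set.Ici 1))
    (hi : ∀ s, 1 ≤ s → IntegrableOn (fun t => φ t / t ^ 2) (Set.Ioi s)) (C : ℝ) (hC : 0 ≤ C) :
    ∃ e : ℕ → ℝ, (∀ n : ℕ, 1 ≤ n → ∀ J : ℕ,
        ∑ i ∈ Finset.range J, (C * φ (n * 2 ^ i)) / 2 ^ i ≤ n * e n) ∧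
      Tendsto e atTop (nhds 0) := by
  obtain ⟨G, G0, G1, G2⟩ := tail_fact φ h0 hm hi
  refine ⟨fun n => 4 * C * G n, ?_, by simpa using G2.const_mul (4 * C)⟩
  intro n hn J
  have hn' : (1 : ℝ) ≤ n := by exact_mod_cast hn
  have hge : ∀ i : ℕ, (1 : ℝ) ≤ n * 2 ^ i := fun i =>
    one_le_mul_of_one_le_of_one_le hn' (one_le_pow₀ (by norm_num))
  have key : ∀ J : ℕ, ∑ i ∈ Finset.range J, (φ (n * 2 ^ i)) / 2 ^ i
      + 4 * n * G (n * 2 ^ J) ≤ 4 * n * G n := by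
    intro J
    induction J with
    | zero => simp
    | succ J ih =>
      rw [Finset.sum_range_succ]
      have a := G1 _ (hge J)
      have e : (2 : ℝ) * (n * 2 ^ J) = n * 2 ^ (J + 1) := by ring
      rw [e] at a
      have a' := mul_le_mul_of_nonneg_left a (by positivity : (0 : ℝ) ≤ 4 * n)
      have e2 : 4 * (n : ℝ) * (φ (n * 2 ^ J) / (4 * (n * 2 ^ J))) = φ (n * 2 ^ J) / 2 ^ J := by
        have : (n : ℝ) ≠ 0 := by linarith
        field_simp
      rw [mul_add, e2] at a'
      linarith
  have a := key J
  have b := G0 _ (hge J)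
  have c : 0 ≤ 4 * n * G (n * 2 ^ J) := by positivity
  have : ∑ i ∈ Finset.range J, (φ (n * 2 ^ i)) / 2 ^ i ≤ 4 * n * G n := by linarith
  simp_rw [mul_div_assoc]
  rw [← Finset.mul_sum]
  calc _ ≤ C * (4 * n * G n) := by gcongr
    _ = _ := by ring

/-- Almost subadditive sequences have a limit. -/
lemma almost_fekete (φ : ℝ → ℝ) (C : ℝ) (hC : 0 ≤ C) (h0 : ∀ t, 1 ≤ t → 0 ≤ φ t)
    (hm : MonotoneOn φ (Set.Ici 1)) (e : ℕ → ℝ)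
    (he : ∀ n : ℕ, 1 ≤ n → ∀ J : ℕ,
        ∑ i ∈ Finset.range J, (C * φ (n * 2 ^ i)) / 2 ^ i ≤ n * e n)
    (n : ℕ) (hn : 1 ≤ n) (f : ℕ → ℝ) (f0 : f 0 = 0)
    (hf : ∀ k l : ℕ, 1 ≤ k → 1 ≤ l → f (k + l) ≤ f k + f l + C * φ (n * (k + l : ℕ))) (k : ℕ) :
    f k ≤ k * (f 1 + 3 * (n * e n)) := by
  have hn' : (1 : ℝ) ≤ n := by exact_mod_cast hn
  have hge : ∀ i : ℕ, (1 : ℝ) ≤ n * 2 ^ i := fun i =>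
    one_le_mul_of_one_le_of_one_le hn' (one_le_pow₀ (by norm_num))
  have hp : ∀ i : ℕ, 0 ≤ C * φ (n * 2 ^ i) := fun i => mul_nonneg hC (h0 _ (hge i))
  refine dyadic_bound f (fun i => C * φ (n * 2 ^ i)) _ f0 hp ?_ (he n hn) k
  intro j m l hml
  rcases Nat.eq_zero_or_pos m with rfl | hm0
  · have := hp j
    simp only [zero_add, f0]; linarith
  rcases Nat.eq_zero_or_pos l with rfl | hl0
  · have := hp j
    simp only [add_zero, f0]; linarith
  refine (hf m l hm0 hl0).trans ?_
  have h1 : ((m + l : ℕ) : ℝ) ≤ 2 ^ j := by exact_mod_cast hml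
  have h2 : (1 : ℝ) ≤ ((m + l : ℕ) : ℝ) := by exact_mod_cast (by omega : 1 ≤ m + l)
  have h3 : φ (n * (m + l : ℕ)) ≤ φ (n * 2 ^ j) :=
    hm (Set.mem_Ici.2 (one_le_mul_of_one_le_of_one_le hn' h2)) (Set.mem_Ici.2 (hge j))
      (by gcongr)
  gcongr

lemma limit_exists (a b e : ℕ → ℝ) (ha : ∀ n, 0 ≤ a n)
    (hb : ∀ n, b n = a n / n + 3 * e n) (he0 : ∀ n, 1 ≤ n → 0 ≤ e n)
    (he : Tendsto e atTop (nhds 0))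
    (h : ∀ n, 1 ≤ n → ∃ M : ℝ, ∀ m : ℕ, 1 ≤ m → a m / m ≤ b n + M / m + e m) :
    ∃ L, Tendsto (fun n : ℕ => a n / n) atTop (nhds L) := by
  have hb0 : ∀ n, 1 ≤ n → 0 ≤ b n := fun n hn => by
    rw [hb]; have := ha n; have := he0 n hn; positivity
  set S : Set ℝ := b '' Set.Ici 1
  have hS : BddBelow S := ⟨0, by rintro _ ⟨n, hn, rfl⟩; exact hb0 n hn⟩
  have hne : S.Nonempty := ⟨_, 1, Set.mem_Ici.2 le_rfl, rfl⟩
  refine ⟨sInf S, ?_⟩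
  rw [tendsto_order]
  constructor
  · intro x hx
    have h3 : Tendsto (fun n => sInf S - 3 * e n) atTop (nhds (sInf S)) := by
      simpa using (he.const_mul 3).const_sub (sInf S)
    filter_upwards [h3.eventually (lt_mem_nhds hx), eventually_ge_atTop 1] with n hn hn1
    have := csInf_le hS ⟨n, hn1, rfl⟩
    rw [hb] at this
    linarith
  · intro x hx
    obtain ⟨_, ⟨n, hn, rfl⟩, hlt⟩ := exists_lt_of_csInf_lt hne hx
    obtain ⟨M, hM⟩ := h n hn
    have h3 : Tendsto (fun m : ℕ => b n + M / m + e m) atTop (nhds (b n)) := by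
      simpa using ((tendsto_const_div_atTop_nhds_zero_nat M).const_add (b n)).add he
    filter_upwards [h3.eventually (gt_mem_nhds hlt), eventually_ge_atTop 1] with m hm hm1
    exact (hM m hm1).trans_lt hm

/-- The asymptotic distances computed with `d` and with the induced homogeneous
pseudometric `𝛿` coincide on `d`-quasi-linear sequences. -/
theorem dista_d_eq_dista_delta {Γ : Type*} [AddCommMonoid Γ]
    (d : Γ → Γ → ℝ) (h : IsMetricAbelianMonoid d)
    (δ : Γ → Γ → ℝ)
    (hδ : ∀ x y : Γ, Filter.Tendsto (fun k : ℕ => d (k • x) (k • y) / k)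
      Filter.atTop (nhds (δ x y)))
    (φ : ℝ → ℝ) (hφ : Admissible φ) (hφpos : ∀ t : ℝ, 1 ≤ t → 0 < φ t)
    (C₁ C₂ : ℝ) (hC₁ : 0 ≤ C₁) (hC₂ : 0 ≤ C₂)
    (γ₁ γ₂ : ℕ → Γ)
    (hγ₁ : QuasiLinear d (fun t => C₁ * φ t) γ₁)
    (hγ₂ : QuasiLinear d (fun t => C₂ * φ t) γ₂) :
    ∃ L : ℝ,
      Filter.Tendsto (fun n : ℕ => d (γ₁ n) (γ₂ n) / n) Filter.atTop (nhds L) ∧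
      Filter.Tendsto (fun n : ℕ => δ (γ₁ n) (γ₂ n) / n) Filter.atTop (nhds L) := by
  obtain ⟨⟨drefl, dsymm, dtri⟩, dadd⟩ := h
  obtain ⟨D, h0, hm, -, hi, -⟩ := hφ
  have dnn : ∀ x y, 0 ≤ d x y := fun x y => by
    have := dtri x y x; rw [drefl, dsymm y x] at this; linarith
  have dadd2 : ∀ x y z w, d (x + y) (z + w) ≤ d x z + d y w := fun x y z w => by
    have a1 := dtri (x + y) (x + w) (z + w)
    have a2 := dadd x y w
    have a3 := dadd w x z
    rw [add_comm w x, add_comm w z] at a3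
    linarith
  set C := C₁ + C₂ with hCdef
  have hC : 0 ≤ C := by positivity
  obtain ⟨e, he, hlim⟩ := eps_fact φ h0 hm hi C hC
  have heφ : ∀ n : ℕ, 1 ≤ n → C * φ n ≤ n * e n := fun n hn => by
    simpa using he n hn 1
  have he0 : ∀ n : ℕ, 1 ≤ n → 0 ≤ e n := fun n hn => by
    have h1 := he n hn 0
    have h2 : (0 : ℝ) < n := by exact_mod_cast hn
    simp only [Finset.range_zero, Finset.sum_empty] at h1
    exact nonneg_of_mul_nonneg_right h1 h2
  have hq1 : ∀ m n : ℕ, 1 ≤ m → 1 ≤ n →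
      d (γ₁ (m + n)) (γ₁ m + γ₁ n) ≤ C₁ * φ ((m + n : ℕ) : ℝ) := hγ₁.2
  have hq2 : ∀ m n : ℕ, 1 ≤ m → 1 ≤ n →
      d (γ₂ (m + n)) (γ₂ m + γ₂ n) ≤ C₂ * φ ((m + n : ℕ) : ℝ) := hγ₂.2
  have hcast : ∀ m n : ℕ, 1 ≤ m → 0 ≤ φ ((m + n : ℕ) : ℝ) := fun m n hm =>
    h0 _ (by exact_mod_cast (by omega : 1 ≤ m + n))
  -- the almost subadditive sequence
  set a : ℕ → ℝ := fun n => d (γ₁ n) (γ₂ n) with hadef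
  have a0 : a 0 = 0 := by simp only [hadef, hγ₁.1, hγ₂.1, drefl]
  have asub : ∀ m n : ℕ, 1 ≤ m → 1 ≤ n → a (m + n) ≤ a m + a n + C * φ ((m + n : ℕ) : ℝ) := by
    intro m n hm hn
    have b1 := dtri (γ₁ (m + n)) (γ₁ m + γ₁ n) (γ₂ (m + n))
    have b2 := dtri (γ₁ m + γ₁ n) (γ₂ m + γ₂ n) (γ₂ (m + n))
    have b3 := dadd2 (γ₁ m) (γ₁ n) (γ₂ m) (γ₂ n)
    have b4 := hq1 m n hm hn
    have b5 := hq2 m n hm hn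
    rw [dsymm] at b5
    simp only [hadef, hCdef]
    linarith
  have amul : ∀ n : ℕ, 1 ≤ n → ∀ k : ℕ, a (n * k) ≤ k * (a n + 3 * (n * e n)) := by
    intro n hn k
    have := almost_fekete φ C hC h0 hm e he n hn (fun k => a (n * k)) (by simpa using a0) ?_ k
    · simpa using this
    intro k l hk hl
    have := asub (n * k) (n * l) (Nat.mul_pos hn hk) (Nat.mul_pos hn hl)
    rw [← Nat.mul_add] at this
    simpa only [Nat.cast_mul] using this
  have qmul : ∀ (γ : ℕ → Γ), γ 0 = 0 → (∀ m n : ℕ, 1 ≤ m → 1 ≤ n →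
      d (γ (m + n)) (γ m + γ n) ≤ C * φ ((m + n : ℕ) : ℝ)) → ∀ n : ℕ, 1 ≤ n → ∀ k : ℕ,
      d (γ (n * k)) (k • γ n) ≤ k * (3 * (n * e n)) := by
    intro γ g0 hg n hn k
    have := almost_fekete φ C hC h0 hm e he n hn (fun k => d (γ (n * k)) (k • γ n))
      (by simp [g0, drefl]) ?_ k
    · simpa [drefl] using this
    intro k l hk hl
    have b1 := hg (n * k) (n * l) (Nat.mul_pos hn hk) (Nat.mul_pos hn hl)
    rw [← Nat.mul_add, Nat.cast_mul] at b1
    have b2 := dtri (γ (n * (k + l))) (γ (n * k) + γ (n * l)) ((k + l) • γ n)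
    have b3 := dadd2 (γ (n * k)) (γ (n * l)) (k • γ n) (l • γ n)
    rw [← add_nsmul] at b3
    show d (γ (n * (k + l))) ((k + l) • γ n) ≤ _
    linarith
  have qm1 := qmul γ₁ hγ₁.1 fun m n hm hn => (hq1 m n hm hn).trans
    (mul_le_mul_of_nonneg_right (by linarith) (hcast m n hm))
  have qm2 := qmul γ₂ hγ₂.1 fun m n hm hn => (hq2 m n hm hn).trans
    (mul_le_mul_of_nonneg_right (by linarith) (hcast m n hm))
  have ann : ∀ n, 0 ≤ a n := fun n => dnn _ _
  obtain ⟨L, hL⟩ : ∃ L, Tendsto (fun n : ℕ => a n / n) atTop (nhds L) := by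
    refine limit_exists a (fun n => a n / n + 3 * e n) e ann (fun _ => rfl) he0 hlim ?_
    intro n hn
    refine ⟨∑ r ∈ Finset.range n, a r, fun m hm1 => ?_⟩
    have hmr : (0 : ℝ) < m := by exact_mod_cast hm1
    have hnr : (0 : ℝ) < n := by exact_mod_cast hn
    set M := ∑ r ∈ Finset.range n, a r with hM
    have c1 : a (m % n) ≤ M :=
      Finset.single_le_sum (f := a) (fun i _ => ann i) (Finset.mem_range.2 (Nat.mod_lt _ hn))
    have c2 : a m ≤ a (n * (m / n)) + a (m % n) + m * e m := by
      have em := Nat.div_add_mod m n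
      have hem : 0 ≤ m * e m := mul_nonneg hmr.le (he0 m hm1)
      rcases Nat.eq_zero_or_pos (n * (m / n)) with hz | hz
      · rw [hz, zero_add] at em
        rw [hz, a0, em]; linarith
      rcases Nat.eq_zero_or_pos (m % n) with hz' | hz'
      · rw [hz', add_zero] at em
        rw [hz', a0, em]; linarith
      have := asub _ _ hz hz'
      rw [em] at this
      have := heφ m hm1
      linarith
    have c3 := amul n hn (m / n)
    have c4 : ((m / n : ℕ) : ℝ) ≤ m / n := Nat.cast_div_le
    have c5 : ((m / n : ℕ) : ℝ) * (a n + 3 * (n * e n)) ≤ (m / n) * (a n + 3 * (n * e n)) := by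
      have := ann n
      have := he0 n hn
      gcongr
    rw [div_le_iff₀ hmr]
    have c6 : (a n / n + 3 * e n + M / m + e m) * m
        = (m / n) * (a n + 3 * (n * e n)) + M + m * e m := by
      field_simp
    show a m ≤ (a n / n + 3 * e n + M / m + e m) * m
    rw [c6]
    linarith
  refine ⟨L, hL, ?_⟩
  have key : ∀ n : ℕ, 1 ≤ n → |δ (γ₁ n) (γ₂ n) / n - L| ≤ 6 * e n := by
    intro n hn
    have hnr : (0 : ℝ) < n := by exact_mod_cast hn
    have t1 : Tendsto (fun k : ℕ => a (n * k) / (n * k : ℕ)) atTop (nhds L) :=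
      hL.comp (tendsto_id.const_mul_atTop' hn)
    have t2 := ((hδ (γ₁ n) (γ₂ n)).div_const (n : ℝ)).sub t1
    refine le_of_tendsto t2.abs ?_
    filter_upwards [eventually_ge_atTop 1] with k hk
    have hkr : (0 : ℝ) < k := by exact_mod_cast hk
    have s1 := qm1 n hn k
    have s2 := qm2 n hn k
    have u1 := dtri (γ₁ (n * k)) (k • γ₁ n) (γ₂ (n * k))
    have u2 := dtri (k • γ₁ n) (k • γ₂ n) (γ₂ (n * k))
    have v1 := dtri (k • γ₁ n) (γ₁ (n * k)) (k • γ₂ n)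
    have v2 := dtri (γ₁ (n * k)) (γ₂ (n * k)) (k • γ₂ n)
    rw [dsymm (k • γ₂ n) (γ₂ (n * k))] at u2
    rw [dsymm (k • γ₁ n) (γ₁ (n * k))] at v1
    have w : d (k • γ₁ n) (k • γ₂ n) / k / n - a (n * k) / (n * k : ℕ)
        = (d (k • γ₁ n) (k • γ₂ n) - d (γ₁ (n * k)) (γ₂ (n * k))) / (n * k) := by
      simp only [hadef]
      push_cast
      field_simp
    rw [w, abs_div, abs_of_pos (mul_pos hnr hkr), div_le_iff₀ (mul_pos hnr hkr), abs_le]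
    constructor <;> linarith
  rw [tendsto_iff_norm_sub_tendsto_zero]
  refine squeeze_zero' (Eventually.of_forall fun _ => norm_nonneg _) ?_
    (by simpa using hlim.const_mul 6)
  filter_upwards [eventually_ge_atTop 1] with n hn
  exact key n hn
end

section
/- Let (Γ,+,d) be a metric Abelian monoid, 𝛿(x,y) := lim_{k→∞} (1/k)·d(k•x, k•y) the induced homogeneous pseudometric, and φ a positive admissible function. Then the d-quasi-linear sequences are dense among the 𝛿-quasi-linear sequences with respect to the asymptotic distance: for every sequence γ̄ that is quasi-linear with respect to 𝛿 with defect bounded by a multiple of φ, and every ε > 0, there exist i ∈ ℕ and the sequence γ̄ᵢ defined by γᵢ(n) := ⌊n/i⌋•γ(i), which is quasi-linear with respect to d with defect bounded by a multiple of φ, such that lim_{n→∞} (1/n)·𝛿(γᵢ(n), γ(n)) < ε. -/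
open MeasureTheory Filter

theorem aux_delta_props {Γ : Type*} [AddCommMonoid Γ]
    (d : Γ → Γ → ℝ) (h : IsMetricAbelianMonoid d)
    (δ : Γ → Γ → ℝ)
    (hδ : ∀ x y : Γ, Filter.Tendsto (fun k : ℕ => d (k • x) (k • y) / k)
      Filter.atTop (nhds (δ x y))) :
    IsMetricAbelianMonoid δ ∧ (∀ x y, 0 ≤ δ x y) ∧
      ∀ (k : ℕ) (x y : Γ), δ (k • x) (k • y) = k * δ x y := by
  obtain ⟨⟨h0, hs, ht⟩, hl⟩ := h
  have hnn : ∀ x y, 0 ≤ d x y := fun x y => by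
    have := ht x y x
    rw [h0, hs y x] at this
    linarith
  refine ⟨⟨⟨fun x => ?_, fun x y => ?_, fun x y z => ?_⟩, fun a b c => ?_⟩, fun x y => ?_,
    fun k x y => ?_⟩
  · refine tendsto_nhds_unique (hδ x x) ?_
    simp [h0]
  · refine tendsto_nhds_unique (hδ x y) ?_
    simp_rw [hs (_ • x) (_ • y)]
    exact hδ y x
  · refine le_of_tendsto_of_tendsto' (hδ x z) ((hδ x y).add (hδ y z)) fun k => ?_
    rw [← add_div]
    exact div_le_div_of_nonneg_right (ht _ _ _) (Nat.cast_nonneg k)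
  · refine le_of_tendsto_of_tendsto' (hδ _ _) (hδ b c) fun k => ?_
    rw [smul_add, smul_add]
    exact div_le_div_of_nonneg_right (hl _ _ _) (Nat.cast_nonneg k)
  · exact ge_of_tendsto' (hδ x y) fun k => div_nonneg (hnn _ _) (Nat.cast_nonneg k)
  · rcases Nat.eq_zero_or_pos k with rfl | hk
    · refine tendsto_nhds_unique (hδ _ _) ?_
      simp [h0]
    · refine tendsto_nhds_unique (hδ _ _) ?_
      have hmul : Tendsto (fun l : ℕ => l * k) atTop atTop :=
        tendsto_id.atTop_mul_const' hk
      have := ((hδ x y).comp hmul).const_mul (k : ℝ)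
      refine this.congr fun l => ?_
      have hk' : (k : ℝ) ≠ 0 := by positivity
      simp only [Function.comp, Nat.cast_mul, mul_smul]
      rcases Nat.eq_zero_or_pos l with rfl | hl0
      · simp
      · have : (l : ℝ) ≠ 0 := by positivity
        field_simp

/-- The tail function: it dominates `φ(s)/s` telescopically and tends to zero. -/
theorem aux_tail (φ : ℝ → ℝ) (hφ : Admissible φ) :
    ∃ I : ℝ → ℝ, (∀ s, 1 ≤ s → 0 ≤ I s) ∧ (∀ s t, 1 ≤ s → s ≤ t → I t ≤ I s) ∧
      (∀ s, 1 ≤ s → φ s ≤ 2 * s * (I s - I (2 * s))) ∧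
      Tendsto I atTop (nhds 0) := by
  obtain ⟨D, hpos, hmono, hD, hint, -⟩ := hφ
  have hsplit : ∀ s t, 1 ≤ s → s ≤ t → ∫ u in Set.Ioi s, φ u / u ^ 2 =
      (∫ u in Set.Ioc s t, φ u / u ^ 2) + ∫ u in Set.Ioi t, φ u / u ^ 2 := by
    intro s t hs hst
    rw [← Set.Ioc_union_Ioi_eq_Ioi hst]
    refine setIntegral_union (Set.Ioc_disjoint_Ioi le_rfl) measurableSet_Ioi
      ((hint s hs).mono_set Set.Ioc_subset_Ioi_self) (hint t (hs.trans hst))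
  have hnn : ∀ s u, 1 ≤ s → s < u → 0 ≤ φ u / u ^ 2 := fun s u hs hu =>
    div_nonneg (hpos u (hs.trans hu.le)) (sq_nonneg u)
  refine ⟨fun s => ∫ u in Set.Ioi s, φ u / u ^ 2, fun s hs => ?_, fun s t hs hst => ?_,
    fun s hs => ?_, ?_⟩
  · exact setIntegral_nonneg measurableSet_Ioi fun u hu => hnn s u hs hu
  · simp only
    rw [hsplit s t hs hst]
    have : 0 ≤ ∫ u in Set.Ioc s t, φ u / u ^ 2 :=
      setIntegral_nonneg measurableSet_Ioc fun u hu => hnn s u hs hu.1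
    linarith
  · simp only
    have hs0 : 0 < s := by linarith
    rw [hsplit s (2 * s) hs (by linarith), add_sub_cancel_right]
    have hbase : IntegrableOn (fun u : ℝ => φ s * u ^ (-2 : ℝ)) (Set.Ioc s (2 * s)) :=
      ((integrableOn_Ioi_rpow_of_lt (by norm_num) hs0).mono_set
        Set.Ioc_subset_Ioi_self).const_mul _
    have h1 : ∫ u in Set.Ioc s (2 * s), φ s * u ^ (-2 : ℝ) ≤
        ∫ u in Set.Ioc s (2 * s), φ u / u ^ 2 := by
      refine setIntegral_mono_on hbase ((hint s hs).mono_set Set.Ioc_subset_Ioi_self)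
        measurableSet_Ioc fun u hu => ?_
      have hu0 : 0 < u := hs0.trans hu.1
      rw [Real.rpow_neg hu0.le, div_eq_mul_inv]
      norm_cast
      exact mul_le_mul_of_nonneg_right (hmono hs (hs.trans hu.1.le) hu.1.le) (by positivity)
    have h2 : ∫ u in Set.Ioc s (2 * s), φ s * u ^ (-2 : ℝ) = φ s / (2 * s) := by
      rw [← intervalIntegral.integral_of_le (by linarith), intervalIntegral.integral_const_mul,
        integral_rpow (Or.inr ⟨by norm_num, by
          rw [Set.uIcc_of_le (by linarith)]
          exact fun h => by linarith [h.1]⟩)]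
      norm_num
      rw [Real.rpow_neg_one, Real.rpow_neg_one]
      field_simp
      ring
    rw [h2] at h1
    rw [div_le_iff₀ (by positivity)] at h1
    linarith
  · have := intervalIntegral_tendsto_integral_Ioi (μ := volume) 1 (hint 1 le_rfl) tendsto_id
    have h2 := this.const_sub (∫ u in Set.Ioi (1 : ℝ), φ u / u ^ 2)
    rw [sub_self] at h2
    refine h2.congr' ?_
    filter_upwards [eventually_ge_atTop 1] with s hs
    rw [id, intervalIntegral.integral_of_le hs, hsplit 1 s le_rfl hs]
    ring

theorem aux_dyadic {Γ : Type*} [AddCommMonoid Γ] (δ : Γ → Γ → ℝ)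
    (h : IsMetricAbelianMonoid δ)
    (hom : ∀ (k : ℕ) (x y : Γ), δ (k • x) (k • y) = k * δ x y)
    (φ I : ℝ → ℝ) (C : ℝ) (hC : 0 ≤ C) (γ : ℕ → Γ)
    (hγ : QuasiLinear δ (fun t => C * φ t) γ)
    (hI : ∀ s, 1 ≤ s → φ s ≤ 2 * s * (I s - I (2 * s)))
    (n : ℕ) (hn : 1 ≤ n) (k : ℕ) :
    δ (γ (2 ^ k * n)) (2 ^ k • γ n) ≤
      2 * C * (2 ^ k * n) * (I (2 * n) - I (2 * (2 ^ k * n))) := by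
  obtain ⟨⟨h0, hs, ht⟩, hl⟩ := h
  induction k with
  | zero => simp [h0]
  | succ k ih =>
    have hp : 1 ≤ 2 ^ k * n := Nat.mul_pos (by positivity) hn
    have h1 := hγ.2 (2 ^ k * n) (2 ^ k * n) hp hp
    have h2 := hom 2 (γ (2 ^ k * n)) (2 ^ k • γ n)
    have h3 := ht (γ (2 ^ (k + 1) * n)) (2 • γ (2 ^ k * n)) (2 ^ (k + 1) • γ n)
    have e1 : 2 ^ k * n + 2 ^ k * n = 2 ^ (k + 1) * n := by ring
    have e2 : 2 ^ (k + 1) • γ n = 2 • 2 ^ k • γ n := by rw [← mul_smul, pow_succ']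
    rw [e1, ← two_nsmul] at h1
    rw [← e2] at h2
    have hp' : (1 : ℝ) ≤ 2 ^ (k + 1) * n := by
      have : 1 ≤ 2 ^ (k + 1) * n := Nat.mul_pos (by positivity) hn
      exact_mod_cast this
    have h4 := mul_le_mul_of_nonneg_left (hI _ hp') hC
    push_cast at h1 h2
    have e3 : (2 : ℝ) * (2 ^ k * n) = 2 ^ (k + 1) * n := by ring
    rw [e3] at ih
    have e4 : 2 * C * (2 ^ (k + 1) * (n : ℝ)) = 2 * (2 * C * (2 ^ k * n)) := by ring
    have e5 : C * (2 * (2 ^ (k + 1) * (n : ℝ)) * (I (2 ^ (k + 1) * n) -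
      I (2 * (2 ^ (k + 1) * n)))) = 2 * (2 * C * (2 ^ k * n)) * (I (2 ^ (k + 1) * n) -
      I (2 * (2 ^ (k + 1) * n))) := by ring
    rw [e4]
    rw [e5] at h4
    linarith

theorem aux_nsmul {Γ : Type*} [AddCommMonoid Γ] (δ : Γ → Γ → ℝ)
    (h : IsMetricAbelianMonoid δ)
    (φ : ℝ → ℝ) (hmono : MonotoneOn φ (Set.Ici 1)) (hφ0 : ∀ t, 1 ≤ t → 0 ≤ φ t)
    (C : ℝ) (hC : 0 ≤ C) (γ : ℕ → Γ)
    (hγ : QuasiLinear δ (fun t => C * φ t) γ) (n : ℕ) (hn : 1 ≤ n) (q : ℕ) (hq : 1 ≤ q) :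
    δ (γ (q * n)) (q • γ n) ≤ q * (C * φ (q * n)) := by
  obtain ⟨⟨h0, hs, ht⟩, hl⟩ := h
  have hn' : (1 : ℝ) ≤ n := by exact_mod_cast hn
  induction q, hq using Nat.le_induction with
  | base =>
    simp only [one_mul, one_smul, h0, Nat.cast_one]
    exact mul_nonneg hC (hφ0 _ hn')
  | succ q hq ih =>
    have h1 := hγ.2 n (q * n) hn (Nat.mul_pos hq hn)
    have e1 : n + q * n = (q + 1) * n := by ring
    rw [e1] at h1
    have h2 := hl (γ n) (γ (q * n)) (q • γ n)
    have h3 := ht (γ ((q + 1) * n)) (γ n + γ (q * n)) ((q + 1) • γ n)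
    rw [← succ_nsmul'] at h2
    have hq' : (1 : ℝ) ≤ q := by exact_mod_cast hq
    have h5 : (1 : ℝ) ≤ q * n := one_le_mul_of_one_le_of_one_le hq' hn'
    have h4 : φ (q * n) ≤ φ ((q + 1 : ℝ) * n) :=
      hmono h5 (by simp only [Set.mem_Ici]; nlinarith) (by nlinarith)
    have h6 := mul_le_mul_of_nonneg_left (mul_le_mul_of_nonneg_left h4 hC)
      (by linarith : (0 : ℝ) ≤ q)
    push_cast at h1 ⊢
    linarith

theorem aux_main {Γ : Type*} [AddCommMonoid Γ] (δ : Γ → Γ → ℝ)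
    (h : IsMetricAbelianMonoid δ)
    (hom : ∀ (k : ℕ) (x y : Γ), δ (k • x) (k • y) = k * δ x y)
    (φ I : ℝ → ℝ) (hmono : MonotoneOn φ (Set.Ici 1)) (hφ0 : ∀ t, 1 ≤ t → 0 ≤ φ t)
    (C : ℝ) (hC : 0 ≤ C) (γ : ℕ → Γ)
    (hγ : QuasiLinear δ (fun t => C * φ t) γ)
    (hI0 : ∀ s, 1 ≤ s → 0 ≤ I s) (hIa : ∀ s t, 1 ≤ s → s ≤ t → I t ≤ I s)
    (hI : ∀ s, 1 ≤ s → φ s ≤ 2 * s * (I s - I (2 * s)))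
    (hI1 : Tendsto I atTop (nhds 0))
    (n : ℕ) (hn : 1 ≤ n) (q : ℕ) (hq : 1 ≤ q) :
    δ (q • γ n) (γ (q * n)) ≤ 4 * C * (q * n) * I n := by
  have hn' : (1 : ℝ) ≤ n := by exact_mod_cast hn
  have hq' : (1 : ℝ) ≤ q := by exact_mod_cast hq
  have hdy : ∀ (m : ℕ), n ≤ m → ∀ k : ℕ, δ (γ (2 ^ k * m)) (2 ^ k • γ m) ≤
      2 * C * (2 ^ k * m) * I n := by
    intro m hm k
    refine (aux_dyadic δ h hom φ I C hC γ hγ hI m (hn.trans hm) k).trans ?_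
    have hm' : (n : ℝ) ≤ m := by exact_mod_cast hm
    have hk : (1 : ℝ) ≤ 2 ^ k := one_le_pow₀ (by norm_num)
    have a1 := hIa n (2 * m) hn' (by linarith)
    have a2 := hI0 (2 * (2 ^ k * m)) (by nlinarith)
    exact mul_le_mul_of_nonneg_left (by linarith) (by positivity)
  have hbd : ∀ k : ℕ, δ (q • γ n) (γ (q * n)) ≤ 4 * C * (q * n) * I n +
      2 * C * q * (q * n) * I (2 ^ k * (q * n)) := by
    intro k
    have hk : (1 : ℝ) ≤ 2 ^ k := one_le_pow₀ (by norm_num)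
    have hk1 : 1 ≤ 2 ^ k * n := Nat.mul_pos (by positivity) hn
    have b1 := hdy n le_rfl k
    have b2 := hdy (q * n) (Nat.le_mul_of_pos_left n hq) k
    have b3 := aux_nsmul δ h φ hmono hφ0 C hC γ hγ (2 ^ k * n) hk1 q hq
    have hqn : (1 : ℝ) ≤ q * n := one_le_mul_of_one_le_of_one_le hq' hn'
    have hkqn : (1 : ℝ) ≤ 2 ^ k * (q * n) := one_le_mul_of_one_le_of_one_le hk hqn
    have b4 := hI _ hkqn
    have b5 := hI0 (2 * (2 ^ k * (q * n))) (by linarith)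
    obtain ⟨⟨h0, hs, ht⟩, hl⟩ := h
    have c1 := hom q (γ (2 ^ k * n)) (2 ^ k • γ n)
    have c2 := hom (2 ^ k) (q • γ n) (γ (q * n))
    have e1 : q * (2 ^ k * n) = 2 ^ k * (q * n) := by ring
    have e2 : q • 2 ^ k • γ n = 2 ^ k • q • γ n := by rw [← mul_smul, ← mul_smul, mul_comm]
    have e3 : (q : ℝ) * (2 ^ k * n) = 2 ^ k * (q * n) := by ring
    rw [e2] at c1
    push_cast at b1 b2 b3 c1 c2
    rw [e1, e3] at b3
    have t1 := ht (2 ^ k • q • γ n) (q • γ (2 ^ k * n)) (2 ^ k • γ (q * n))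
    have t2 := ht (q • γ (2 ^ k * n)) (γ (2 ^ k * (q * n))) (2 ^ k • γ (q * n))
    rw [hs (2 ^ k • q • γ n) (q • γ (2 ^ k * n)), c1] at t1
    rw [hs (q • γ (2 ^ k * n)) (γ (2 ^ k * (q * n)))] at t2
    rw [c2] at t1
    have d1 := mul_le_mul_of_nonneg_left b1 (by linarith : (0 : ℝ) ≤ q)
    have b6 : φ (2 ^ k * (q * n)) ≤ 2 * (2 ^ k * (q * n)) * I (2 ^ k * (q * n)) :=
      b4.trans (mul_le_mul_of_nonneg_left (by linarith) (by positivity))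
    have d2 := mul_le_mul_of_nonneg_left (mul_le_mul_of_nonneg_left b6 hC)
      (by linarith : (0 : ℝ) ≤ q)
    refine le_of_mul_le_mul_left ?_ (by linarith : (0 : ℝ) < 2 ^ k)
    linarith
  have hlim : Tendsto (fun k : ℕ => 4 * C * (q * n) * I n +
      2 * C * q * (q * n) * I (2 ^ k * (q * n))) atTop
      (nhds (4 * C * (q * n) * I n + 2 * C * q * (q * n) * 0)) := by
    refine tendsto_const_nhds.add (Tendsto.const_mul _ (hI1.comp ?_))
    exact (tendsto_pow_atTop_atTop_of_one_lt (by norm_num)).atTop_mul_const (by positivity)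
  have := ge_of_tendsto' hlim hbd
  linarith

/-- The `d`-quasi-linear sequences are dense among the `𝛿`-quasi-linear
sequences with respect to the asymptotic distance: any `𝛿`-quasi-linear
sequence `γ` is approximated by the sequences `n ↦ ⌊n/i⌋ • γ i`. -/
theorem d_qlin_dense_in_delta_qlin {Γ : Type*} [AddCommMonoid Γ]
    (d : Γ → Γ → ℝ) (h : IsMetricAbelianMonoid d)
    (δ : Γ → Γ → ℝ)
    (hδ : ∀ x y : Γ, Filter.Tendsto (fun k : ℕ => d (k • x) (k • y) / k)
      Filter.atTop (nhds (δ x y)))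
    (φ : ℝ → ℝ) (hφ : Admissible φ) (hφpos : ∀ t : ℝ, 1 ≤ t → 0 < φ t)
    (C : ℝ) (hC : 0 ≤ C)
    (γ : ℕ → Γ) (hγ : QuasiLinear δ (fun t => C * φ t) γ)
    (ε : ℝ) (hε : 0 < ε) :
    ∃ i : ℕ, 1 ≤ i ∧
      (∃ Ci ≥ (0 : ℝ), QuasiLinear d (fun t => Ci * φ t) (fun n : ℕ => (n / i) • γ i)) ∧
      dista δ (fun n : ℕ => (n / i) • γ i) γ < ε := by
  obtain ⟨hδM, hδ0, hom⟩ := aux_delta_props d h δ hδ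
  obtain ⟨I, hI0, hIa, hI, hI1⟩ := aux_tail φ hφ
  obtain ⟨D, hφ0, hmono, -, -⟩ := hφ
  have hIC : Tendsto (fun i : ℕ => 4 * C * I i) atTop (nhds (4 * C * 0)) :=
    (hI1.comp tendsto_natCast_atTop_atTop).const_mul _
  rw [mul_zero] at hIC
  obtain ⟨i, hi, hi1⟩ := ((hIC.eventually (gt_mem_nhds (by positivity : 0 < ε / 4))).and
    (eventually_ge_atTop 1)).exists
  refine ⟨i, hi1, ?_, ?_⟩
  · obtain ⟨⟨h0, hs, ht⟩, hl⟩ := h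
    have hnn : 0 ≤ d (γ i) 0 := by
      have := ht (γ i) 0 (γ i)
      rw [h0, hs 0] at this
      linarith
    have hp1 := hφpos 1 le_rfl
    refine ⟨d (γ i) 0 / φ 1, by positivity, by simp, fun m n hm hn => ?_⟩
    have hmn : (1 : ℝ) ≤ ((m + n : ℕ) : ℝ) := by exact_mod_cast (by omega)
    have hle : d (γ i) 0 ≤ d (γ i) 0 / φ 1 * φ ((m + n : ℕ) : ℝ) := by
      rw [div_mul_eq_mul_div, le_div_iff₀ hp1]
      exact mul_le_mul_of_nonneg_left (hmono (by simp) hmn hmn) hnn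
    refine le_trans ?_ hle
    simp only
    rw [← add_smul, Nat.add_div hi1]
    split_ifs
    · rw [add_smul _ 1, one_smul]
      have := hl ((m / i + n / i) • γ i) (γ i) 0
      rwa [add_zero] at this
    · rw [add_zero, h0]
      exact hnn
  · obtain ⟨⟨h0, hs, ht⟩, hl⟩ := id hδM
    set M : ℝ := ∑ r ∈ Finset.range i, δ (γ r) 0 with hM
    have hbd : ∀ n : ℕ, i ≤ n → δ ((n / i) • γ i) (γ n) ≤
        4 * C * I i * n + C * φ n + M := by
      intro n hn
      have hq : 1 ≤ n / i := (Nat.one_le_div_iff hi1).2 hn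
      have h1 := aux_main δ hδM hom φ I hmono hφ0 C hC γ hγ hI0 hIa hI hI1 i hi1 (n / i) hq
      have hr : n % i < i := Nat.mod_lt _ hi1
      have hMr : δ (γ (n % i)) 0 ≤ M :=
        Finset.single_le_sum (f := fun r => δ (γ r) 0) (fun r _ => hδ0 _ _)
          (Finset.mem_range.2 hr)
      have hn1 : (1 : ℝ) ≤ n := by exact_mod_cast hi1.trans hn
      have hqi : n / i * i + n % i = n := Nat.div_add_mod' n i
      have h2 : δ (γ (n / i * i)) (γ n) ≤ C * φ n + M := by
        rcases Nat.eq_zero_or_pos (n % i) with h0r | hrp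
        · rw [h0r, add_zero] at hqi
          rw [hqi, h0]
          exact add_nonneg (mul_nonneg hC (hφ0 _ hn1))
            (Finset.sum_nonneg fun r _ => hδ0 _ _)
        · have a1 := hγ.2 (n / i * i) (n % i) (Nat.mul_pos hq hi1) hrp
          rw [hqi] at a1
          have a2 := hl (γ (n / i * i)) (γ (n % i)) 0
          rw [add_zero] at a2
          have a3 := ht (γ n) (γ (n / i * i) + γ (n % i)) (γ (n / i * i))
          rw [hs]
          linarith
      have h3 := ht ((n / i) • γ i) (γ (n / i * i)) (γ n)
      have h4 : ((n / i : ℕ) : ℝ) * i ≤ n := by exact_mod_cast Nat.div_mul_le_self n i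
      have h5 := hI0 i (by exact_mod_cast hi1)
      have h6 : 4 * C * (((n / i : ℕ) : ℝ) * i) * I i ≤ 4 * C * I i * n := by
        have := mul_le_mul_of_nonneg_left h4 (by positivity : 0 ≤ 4 * C * I i)
        linarith
      linarith
    have hlim : Tendsto (fun n : ℕ => 2 * C * I n + M / n) atTop
        (nhds (2 * C * 0 + 0)) :=
      ((hI1.comp tendsto_natCast_atTop_atTop).const_mul _).add
        (tendsto_const_div_atTop_nhds_zero_nat M)
    rw [mul_zero, add_zero] at hlim
    have hev : ∀ᶠ n : ℕ in atTop, δ ((n / i) • γ i) (γ n) / n ≤ ε / 2 := by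
      filter_upwards [hlim.eventually (gt_mem_nhds (by positivity : 0 < ε / 4)),
        eventually_ge_atTop i] with n hn1 hn
      have hnR : (1 : ℝ) ≤ n := by exact_mod_cast hi1.trans hn
      have hn0 : (0 : ℝ) < n := by linarith
      have a1 := hbd n hn
      have a2 := hI n hnR
      have a3 := hI0 (2 * n) (by linarith)
      have a4 : φ n ≤ 2 * n * I n :=
        a2.trans (mul_le_mul_of_nonneg_left (by linarith) (by positivity))
      have a5 := mul_le_mul_of_nonneg_left a4 hC
      rw [div_le_iff₀ hn0]
      have a6 := mul_lt_mul_of_pos_right hn1 hn0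
      rw [add_mul, div_mul_cancel₀ _ hn0.ne'] at a6
      have a7 := mul_lt_mul_of_pos_right hi hn0
      linarith
    have hcob : IsCoboundedUnder (· ≤ ·) atTop
        (fun n : ℕ => δ ((n / i) • γ i) (γ n) / n) :=
      IsCoboundedUnder.of_frequently_ge (a := 0)
        (Frequently.of_forall fun n => div_nonneg (hδ0 _ _) (Nat.cast_nonneg n))
    have : dista δ (fun n : ℕ => (n / i) • γ i) γ ≤ ε / 2 := limsup_le_of_le hcob hev
    linarith
end
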